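/- There exists an absolute constant γ₀ > 0 such that for every constant ε ∈ (0,1) and every ρ > 0 there exists m₀ such that for all m ≥ m₀ and all r with 1 ≤ r < γ₀·m the following holds. Set K = ⌊(1-ε)·binom(m,≤r)⌋ and let Z be a uniformly random K-element subset of F₂^m. Then 2^{-K} ≤ E[ |I_r(Z)| / 2^{binom(m,≤r)} ] ≤ 2^{-K}·(1 + ρ), where |I_r(Z)| denotes the number of polynomials in I_r(Z). -/

import Mathlib

/-- `binomLe m r = ∑_{i=0}^r C(m,i)`, written `binom(m, ≤ r)`. -/
def binomLe (m r : ℕ) : ℕ := ∑ i ∈ Finset.range (r + 1), Nat.choose m i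

/-- Index type for multilinear monomials of degree at most `r` in `m` variables:
subsets `S ⊆ {1,…,m}` with `|S| ≤ r`. -/
abbrev MonIdx (m r : ℕ) := {S : Finset (Fin m) // S.card ≤ r}

/-- `RM(m,r)` as the space of coefficient vectors of multilinear polynomials in `m`
variables of total degree at most `r` over `F₂`. -/
abbrev RMcode (m r : ℕ) := MonIdx m r → ZMod 2

/-- Evaluation of a polynomial (given by its coefficients) at the point `z`,
as a linear map: `c ↦ ∑_{|S| ≤ r} c_S ∏_{i ∈ S} z_i`. -/
def evalLin (m r : ℕ) (z : Fin m → ZMod 2) : RMcode m r →ₗ[ZMod 2] ZMod 2 :=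
  ∑ S : MonIdx m r, (∏ i ∈ S.1, z i) • LinearMap.proj S

/-- The degree-`r` vanishing space `I_r(Z)` of the set `Z ⊆ F₂^m`. -/
def vanishing (m r : ℕ) (Z : Set (Fin m → ZMod 2)) : Submodule (ZMod 2) (RMcode m r) :=
  ⨅ z ∈ Z, LinearMap.ker (evalLin m r z)

/-- The vector `z^{(r)}` of evaluations at `z` of all multilinear monomials of degree `≤ r`. -/
def monVec (m r : ℕ) (z : Fin m → ZMod 2) : MonIdx m r → ZMod 2 := fun S => ∏ i ∈ S.1, z i

/-- Fractional Hamming weight of the polynomial with coefficients `c`. -/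
noncomputable def wt (m r : ℕ) (c : RMcode m r) : ℝ :=
  ((Finset.univ.filter (fun z : Fin m → ZMod 2 => evalLin m r z c ≠ 0)).card : ℝ) / 2 ^ m

/-- The number of zeros in `F₂^m` of the polynomial with coefficients `c`,
i.e. `(1 - wt(P)) · 2^m`. -/
def numZeros (m r : ℕ) (c : RMcode m r) : ℕ :=
  (Finset.univ.filter (fun z : Fin m → ZMod 2 => evalLin m r z c = 0)).card

/-- The degree-`r` closure of `Z ⊆ F₂^m`. -/
def closureSet (m r : ℕ) (Z : Set (Fin m → ZMod 2)) : Set (Fin m → ZMod 2) :=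
  {u | ∀ c ∈ vanishing m r Z, evalLin m r u c = 0}

/-! Sampling without replacement makes a fixed polynomial `P` vanish on `Z` with probability at
most `((1 + bias P) / 2) ^ K`, where `bias P` is the average of `(-1)^P`. So it is enough
that `(1 + bias P) ^ K` averages to at most `1 + ρ` over `RM(m,r)`, and for this that polynomials
of bias about `2^{-l}` are rare enough to compensate the factor `exp (2^{-l} K)`. The lower bound
is rank-nullity: vanishing on `Z` imposes at most `K` linear conditions.

A polynomial of positive bias can be approximated from few of its derivatives. By a second moment
argument there are `t` directions such that the average of `(-1)^P` over the cube they span at `x`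
is positive for all but a fraction `2^{-t} (bias P)^{-2}` of the points `x`. If `Q` has the same
derivatives as `P` in these directions, then this average for `Q` is `(-1)^{P+Q}` times the one
for `P`, so that `P + Q` is nonzero only where one of the two averages fails to be positive.
The number of polynomials of given bias is hence at most the number of tuples of directions, times
the number of tuples of derivatives, times the number of polynomials of very small weight.

For small weights the derivatives have lower degree and at most twice the weight, and six
directions give a recursion which bounds the number of polynomials of weight at most `2^{-i-1}`
by `2 ^ (16^{-i} binom(m,≤r))`. For small biases the tuples of derivatives are counted by linear
algebra: functions constant along the directions are lost, which leaves
`2 ^ (binom(m,≤r) - binom(m-t,≤r))` tuples.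
-/

open Filter Finset
open scoped BigOperators fwdDiff

section Degree

variable {G H A B R : Type*} [AddCommGroup G] [AddCommGroup H] [AddCommGroup A]
  [AddCommGroup B] [CommRing R]

/-- The forward difference in direction `y`, bundled as an additive homomorphism so that degree
filtrations can be defined by kernels and preimages. -/
def fwdDiffHom (y : G) : (G → A) →+ (G → A) where
  toFun := fwdDiff y
  map_zero' := fwdDiff_const y 0
  map_add' := fwdDiff_add y

variable (G A) in
/-- The functions of degree at most `r`, for the derivative notion of degree: all `(r+1)`-fold
forward differences vanish. -/
def degLE : ℕ → AddSubgroup (G → A)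
  | 0 => ⨅ y : G, (fwdDiffHom y).ker
  | r + 1 => ⨅ y : G, (degLE r).comap (fwdDiffHom y)

theorem mem_degLE_zero {P : G → A} : P ∈ degLE G A 0 ↔ ∀ y, Δ_[y] P = 0 := by
  simp [degLE, AddSubgroup.mem_iInf, AddMonoidHom.mem_ker, fwdDiffHom]

theorem mem_degLE_succ {r : ℕ} {P : G → A} :
    P ∈ degLE G A (r + 1) ↔ ∀ y, Δ_[y] P ∈ degLE G A r := by
  simp [degLE, AddSubgroup.mem_iInf, fwdDiffHom]

theorem mem_degLE_zero_iff_eq_const {P : G → A} : P ∈ degLE G A 0 ↔ ∀ x, P x = P 0 := by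
  refine mem_degLE_zero.trans ⟨fun h x => ?_, fun h y => ?_⟩
  · simpa [fwdDiff, sub_eq_zero] using congrFun (h x) 0
  · ext x
    simp [fwdDiff, h (x + y), h x]

theorem degLE_mono : Monotone (degLE G A) := by
  refine monotone_nat_of_le_succ fun r => ?_
  induction r with
  | zero =>
    intro P hP
    refine mem_degLE_succ.2 fun y => ?_
    rw [mem_degLE_zero.1 hP y]
    exact zero_mem _
  | succ r ih => exact fun P hP => mem_degLE_succ.2 fun y => ih (mem_degLE_succ.1 hP y)

theorem comp_mem_degLE (L : H →+ G) (a : G) {r : ℕ} {P : G → A} (hP : P ∈ degLE G A r) :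
    (fun x => P (L x + a)) ∈ degLE H A r := by
  have fwdDiff_comp (Q : G → A) (y : H) :
      Δ_[y] (fun x => Q (L x + a)) = fun x => Δ_[L y] Q (L x + a) := by
    ext x
    simp only [fwdDiff, map_add, add_right_comm]
  induction r generalizing P with
  | zero => exact mem_degLE_zero.2 fun y => by rw [fwdDiff_comp, mem_degLE_zero.1 hP]; rfl
  | succ r ih =>
    exact mem_degLE_succ.2 fun y => by
      rw [fwdDiff_comp]
      exact ih (mem_degLE_succ.1 hP _)

theorem map_mem_degLE (φ : A →+ B) {r : ℕ} {P : G → A} (hP : P ∈ degLE G A r) :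
    (fun x => φ (P x)) ∈ degLE G B r := by
  have fwdDiff_map (Q : G → A) (y : G) :
      Δ_[y] (fun x => φ (Q x)) = fun x => φ (Δ_[y] Q x) := by
    ext x
    simp only [fwdDiff, map_sub]
  induction r generalizing P with
  | zero =>
    refine mem_degLE_zero.2 fun y => ?_
    rw [fwdDiff_map, mem_degLE_zero.1 hP]
    exact funext fun _ => map_zero φ
  | succ r ih =>
    refine mem_degLE_succ.2 fun y => ?_
    rw [fwdDiff_map]
    exact ih (mem_degLE_succ.1 hP y)

theorem addMonoidHom_mul_mem_degLE_succ (l : G →+ R) {r : ℕ} {P : G → R} (hP : P ∈ degLE G R r) :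
    (fun x => l x * P x) ∈ degLE G R (r + 1) := by
  have leibniz (Q : G → R) (y : G) :
      Δ_[y] (fun x => l x * Q x) = (fun x => l x * Δ_[y] Q x) + fun x => l y * Q (x + y) := by
    ext x
    simp only [fwdDiff, map_add, Pi.add_apply]
    ring
  have smul_shift_mem {r : ℕ} {Q : G → R} (hQ : Q ∈ degLE G R r) (y : G) :
      (fun x => l y * Q (x + y)) ∈ degLE G R r :=
    map_mem_degLE (AddMonoidHom.mulLeft (l y)) (comp_mem_degLE (AddMonoidHom.id G) y hQ)
  induction r generalizing P with
  | zero =>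
    refine mem_degLE_succ.2 fun y => ?_
    rw [leibniz, mem_degLE_zero.1 hP y]
    refine add_mem ?_ (smul_shift_mem hP y)
    simp only [Pi.zero_apply, mul_zero]
    exact zero_mem _
  | succ r ih =>
    refine mem_degLE_succ.2 fun y => ?_
    rw [leibniz]
    exact add_mem (ih (mem_degLE_succ.1 hP y)) (smul_shift_mem hP y)

end Degree

section Weight

variable {G A : Type*} [Fintype G] [AddCommGroup A]

open Classical in
/-- The fraction of points at which `P` does not vanish, i.e. its fractional Hamming weight. -/
noncomputable def fracWeight (P : G → A) : ℝ := 𝔼 x, if P x = 0 then 0 else 1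

theorem fracWeight_nonneg (P : G → A) : 0 ≤ fracWeight P :=
  expect_nonneg fun x _ => by split_ifs <;> norm_num

theorem fracWeight_add_le (P Q : G → A) : fracWeight (P + Q) ≤ fracWeight P + fracWeight Q := by
  classical
  simp only [fracWeight, ← expect_add_distrib]
  refine expect_le_expect fun x _ => ?_
  by_cases hP : P x = 0
  · simp [hP]
  · simp only [hP, if_false]
    split_ifs <;> norm_num

theorem fracWeight_neg (P : G → A) : fracWeight (-P) = fracWeight P := by
  classical
  exact expect_congr rfl fun x _ => if_congr neg_eq_zero rfl rfl

variable [AddCommGroup G]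

theorem fracWeight_shift (P : G → A) (y : G) : fracWeight (fun x => P (x + y)) = fracWeight P :=
  Fintype.expect_equiv (Equiv.addRight y) _ _ fun _ => rfl

theorem fracWeight_fwdDiff_le (P : G → A) (y : G) : fracWeight (Δ_[y] P) ≤ 2 * fracWeight P :=
  calc fracWeight (Δ_[y] P) = fracWeight ((fun x => P (x + y)) + -P) := by
        congr 1
        ext x
        simp [fwdDiff, sub_eq_add_neg]
    _ ≤ fracWeight (fun x => P (x + y)) + fracWeight (-P) := fracWeight_add_le _ _
    _ = 2 * fracWeight P := by rw [fracWeight_shift, fracWeight_neg]; ring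

theorem eq_zero_of_fracWeight_lt {r : ℕ} {P : G → A} (hP : P ∈ degLE G A r)
    (h : fracWeight P < (1 / 2) ^ r) : P = 0 := by
  have eq_zero_of_const {Q : G → A} (hQ : Q ∈ degLE G A 0) (h : fracWeight Q < 1) : Q = 0 := by
    have hconst := mem_degLE_zero_iff_eq_const.1 hQ
    by_cases h0 : Q 0 = 0
    · ext x
      rw [hconst, h0, Pi.zero_apply]
    · simp [fracWeight, hconst, h0] at h
  induction r generalizing P with
  | zero => exact eq_zero_of_const hP (by simpa using h)
  | succ r ih =>
    refine eq_zero_of_const (mem_degLE_zero.2 fun y => ih (mem_degLE_succ.1 hP y) ?_)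
      (h.trans_le (pow_le_one₀ (by norm_num) (by norm_num)))
    calc fracWeight (Δ_[y] P) ≤ 2 * fracWeight P := fracWeight_fwdDiff_le P y
      _ < 2 * (1 / 2) ^ (r + 1) := by gcongr
      _ = (1 / 2) ^ r := by ring

/-- The character `a ↦ (-1)^a` of `F₂`, with real values. -/
def sgn : AddChar (ZMod 2) ℝ := AddChar.zmodChar 2 (neg_one_sq : (-1 : ℝ) ^ 2 = 1)

theorem sgn_eq_ite (a : ZMod 2) : sgn a = if a = 0 then 1 else -1 := by
  have h : ∀ a : ZMod 2, a = 0 ∨ a = 1 := by decide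
  rcases h a with rfl | rfl <;> norm_num [sgn, AddChar.zmodChar_apply, ZMod.val_one]

theorem sgn_mul_self (a : ZMod 2) : sgn a * sgn a = 1 := by
  rw [sgn_eq_ite]
  split_ifs <;> norm_num

theorem eq_zero_of_sgn_pos {a : ZMod 2} (h : 0 < sgn a) : a = 0 := by
  by_contra ha
  rw [sgn_eq_ite, if_neg ha] at h
  linarith

/-- The average of `(-1)^P`. -/
noncomputable def bias (P : G → ZMod 2) : ℝ := 𝔼 x, sgn (P x)

theorem bias_eq (P : G → ZMod 2) : bias P = 1 - 2 * fracWeight P := by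
  classical
  rw [fracWeight, mul_expect, ← Fintype.expect_const (ι := G) (1 : ℝ), ← expect_sub_distrib]
  refine expect_congr rfl fun x _ => ?_
  rw [sgn_eq_ite]
  split_ifs <;> norm_num

theorem bias_le_one (P : G → ZMod 2) : bias P ≤ 1 := by
  linarith [bias_eq P, fracWeight_nonneg P]

theorem neg_one_le_bias (P : G → ZMod 2) : -1 ≤ bias P := by
  rw [← Fintype.expect_const (ι := G) (-1 : ℝ)]
  refine expect_le_expect fun x _ => ?_
  rw [sgn_eq_ite]
  split_ifs <;> norm_num

theorem eq_zero_of_bias_pos_of_mem_degLE_one {P : G → ZMod 2} (hP : P ∈ degLE G (ZMod 2) 1)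
    (hb : 0 < bias P) : P = 0 := by
  have hconst : ∀ x, P x = P 0 := mem_degLE_zero_iff_eq_const.1 <| mem_degLE_zero.2 fun y => by
    have hy := mem_degLE_zero_iff_eq_const.1 (mem_degLE_succ.1 hP y)
    have hshift (x : G) : P (x + y) = Δ_[y] P 0 + P x := by
      rw [← hy x, fwdDiff, sub_add_cancel]
    have hbias : bias P = sgn (Δ_[y] P 0) * bias P := by
      rw [bias, mul_expect]
      simp only [← AddChar.map_add_eq_mul, ← hshift]
      exact (Fintype.expect_equiv (Equiv.addRight y) _ _ fun _ => rfl).symm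
    have hone : sgn (Δ_[y] P 0) = 1 := by
      refine mul_right_cancel₀ hb.ne' ?_
      rw [← hbias, one_mul]
    ext x
    exact (hy x).trans (eq_zero_of_sgn_pos (one_pos.trans_eq hone.symm))
  have hsgn : bias P = sgn (P 0) := by simp [bias, hconst]
  ext x
  rw [hconst, eq_zero_of_sgn_pos (hb.trans_eq hsgn), Pi.zero_apply]

end Weight

section CubeAverage

variable {G : Type*} [AddCommGroup G] {t : ℕ}

/-- The average of `F` over the translates of a point by all subset sums of `ys`. -/
noncomputable def cubeAvg : {t : ℕ} → (Fin t → G) → (G → ℝ) → G → ℝ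
  | 0, _, F => F
  | _ + 1, ys, F => fun x =>
      (cubeAvg (Fin.tail ys) F x + cubeAvg (Fin.tail ys) F (x + ys 0)) / 2

theorem cubeAvg_mul_of_invariant (ys : Fin t → G) (F : G → ℝ) {c : G → ℝ}
    (hc : ∀ i x, c (x + ys i) = c x) (x : G) :
    cubeAvg ys (fun z => F z * c z) x = cubeAvg ys F x * c x := by
  induction t generalizing x with
  | zero => rfl
  | succ t ih =>
    simp only [cubeAvg, ih (Fin.tail ys) fun i => hc i.succ, hc 0]
    ring

variable [Fintype G]

theorem expect_add_right (F : G → ℝ) (y : G) : 𝔼 x, F (x + y) = 𝔼 x, F x :=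
  Fintype.expect_equiv (Equiv.addRight y) _ _ fun _ => rfl

theorem expect_cubeAvg (ys : Fin t → G) (F : G → ℝ) : 𝔼 x, cubeAvg ys F x = 𝔼 x, F x := by
  induction t with
  | zero => rfl
  | succ t ih =>
    simp only [cubeAvg]
    rw [← expect_div, expect_add_distrib, expect_add_right (cubeAvg _ F), ih]
    ring

theorem exists_expect_sq_midpoint_le (F : G → ℝ) (h0 : 𝔼 x, F x = 0) :
    ∃ y, 𝔼 x, ((F x + F (x + y)) / 2) ^ 2 ≤ (𝔼 x, F x ^ 2) / 2 := by
  have expand (y : G) : 𝔼 x, ((F x + F (x + y)) / 2) ^ 2 =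
      (𝔼 x, F x ^ 2) / 2 + (𝔼 x, F x * F (x + y)) / 2 :=
    calc _ = 𝔼 x, (F x ^ 2 / 4 + F (x + y) ^ 2 / 4 + F x * F (x + y) / 2) :=
          expect_congr rfl fun x _ => by ring
      _ = (𝔼 x, F x ^ 2) / 4 + (𝔼 x, F (x + y) ^ 2) / 4 + (𝔼 x, F x * F (x + y)) / 2 := by
          simp only [expect_add_distrib, expect_div]
      _ = _ := by rw [expect_add_right fun x => F x ^ 2]; ring
  have correlation : 𝔼 y, 𝔼 x, F x * F (x + y) = 0 := by
    rw [expect_comm]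
    refine expect_eq_zero fun x _ => ?_
    rw [← mul_expect, Fintype.expect_equiv (Equiv.addLeft x) (fun y => F (x + y)) F fun _ => rfl,
      h0, mul_zero]
  obtain ⟨y, -, hy⟩ := exists_le_of_expect_le (s := univ) univ_nonempty
    (f := fun y => 𝔼 x, ((F x + F (x + y)) / 2) ^ 2) (a := (𝔼 x, F x ^ 2) / 2) <| by
      simp only [expand, expect_add_distrib, ← expect_div, correlation, Fintype.expect_const]
      simp
  exact ⟨y, hy⟩

theorem exists_cubeAvg_variance_le (F : G → ℝ) (t : ℕ) :
    ∃ ys : Fin t → G, 𝔼 x, (cubeAvg ys F x - 𝔼 z, F z) ^ 2 ≤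
      (𝔼 x, (F x - 𝔼 z, F z) ^ 2) / 2 ^ t := by
  induction t with
  | zero => exact ⟨Fin.elim0, by simp [cubeAvg]⟩
  | succ t ih =>
    obtain ⟨ys, hys⟩ := ih
    obtain ⟨y, hy⟩ := exists_expect_sq_midpoint_le (fun x => cubeAvg ys F x - 𝔼 z, F z) (by
      rw [expect_sub_distrib, expect_cubeAvg, Fintype.expect_const, sub_self])
    refine ⟨Fin.cons y ys, ?_⟩
    calc 𝔼 x, (cubeAvg (Fin.cons y ys : Fin (t + 1) → G) F x - 𝔼 z, F z) ^ 2
        = 𝔼 x, ((cubeAvg ys F x - 𝔼 z, F z + (cubeAvg ys F (x + y) - 𝔼 z, F z)) / 2) ^ 2 :=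
          expect_congr rfl fun x _ => by
            simp only [cubeAvg, Fin.tail_cons, Fin.cons_zero]
            ring
      _ ≤ _ := hy
      _ ≤ (𝔼 x, (F x - 𝔼 z, F z) ^ 2) / 2 ^ t / 2 := by gcongr
      _ = _ := by rw [pow_succ, div_div]

end CubeAverage

section ErrorRate

variable {G : Type*} [AddCommGroup G] [Fintype G] {t : ℕ}

/-- The fraction of points at which the majority vote `cubeAvg ys (-1)^P`, which for suitable
directions recovers the bias of `P`, fails to be positive. -/
noncomputable def errorRate (ys : Fin t → G) (P : G → ZMod 2) : ℝ :=
  𝔼 x, if cubeAvg ys (fun z => sgn (P z)) x ≤ 0 then 1 else 0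

theorem errorRate_nonneg (ys : Fin t → G) (P : G → ZMod 2) : 0 ≤ errorRate ys P :=
  expect_nonneg fun x _ => by split_ifs <;> norm_num

theorem exists_errorRate_mul_bias_sq_le (P : G → ZMod 2) (hb : 0 ≤ bias P) (t : ℕ) :
    ∃ ys : Fin t → G, errorRate ys P * bias P ^ 2 ≤ (1 - bias P ^ 2) / 2 ^ t := by
  obtain ⟨ys, hvar⟩ := exists_cubeAvg_variance_le (fun x => sgn (P x)) t
  change 𝔼 x, (_ - bias P) ^ 2 ≤ (𝔼 x, (_ - bias P) ^ 2) / 2 ^ t at hvar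
  have variance_sgn : 𝔼 x, (sgn (P x) - bias P) ^ 2 = 1 - bias P ^ 2 :=
    calc _ = 𝔼 x, (1 + bias P ^ 2 - 2 * bias P * sgn (P x)) :=
          expect_congr rfl fun x _ => by linear_combination sgn_mul_self (P x)
      _ = 1 + bias P ^ 2 - 2 * bias P * bias P := by
          rw [expect_sub_distrib, ← mul_expect, Fintype.expect_const, bias]
      _ = _ := by ring
  refine ⟨ys, le_trans ?_ (variance_sgn ▸ hvar)⟩
  rw [errorRate, expect_mul]
  refine expect_le_expect fun x _ => ?_
  split_ifs with hx
  · nlinarith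
  · rw [zero_mul]
    positivity

theorem fracWeight_add_le_of_fwdDiff_eq (ys : Fin t → G) {P Q : G → ZMod 2}
    (h : ∀ i, Δ_[ys i] P = Δ_[ys i] Q) :
    fracWeight (P + Q) ≤ errorRate ys P + errorRate ys Q := by
  have invariant (i : Fin t) (x : G) : sgn ((P + Q) (x + ys i)) = sgn ((P + Q) x) := by
    have hx : P (x + ys i) - P x = Q (x + ys i) - Q x := congrFun (h i) x
    congr 1
    simp only [Pi.add_apply]
    linear_combination hx + (Q (x + ys i) - Q x) * CharTwo.two_eq_zero (R := ZMod 2)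
  have sgn_Q (x : G) : sgn (Q x) = sgn (P x) * sgn ((P + Q) x) := by
    rw [Pi.add_apply, AddChar.map_add_eq_mul, ← mul_assoc, sgn_mul_self, one_mul]
  rw [errorRate, errorRate, ← expect_add_distrib, fracWeight]
  refine expect_le_expect fun x _ => ?_
  by_cases hx : (P + Q) x = 0
  · rw [if_pos hx]
    split_ifs <;> norm_num
  · have vote_Q : cubeAvg ys (fun z => sgn (Q z)) x = -cubeAvg ys (fun z => sgn (P z)) x := by
      simp only [sgn_Q]
      rw [cubeAvg_mul_of_invariant ys (fun z => sgn (P z)) (c := fun z => sgn ((P + Q) z))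
        invariant, sgn_eq_ite, if_neg hx, mul_neg_one]
    rw [vote_Q, if_neg hx]
    split_ifs <;> linarith

end ErrorRate

section Cardinality

theorem card_le_of_forall_eq_const {G A : Type*} [Zero G] [Finite A] (S : Set (G → A))
    (hS : ∀ P ∈ S, ∀ x, P x = P 0) : Nat.card S ≤ Nat.card A := by
  refine Nat.card_le_card_of_injective (fun P : S => P.1 0) fun P Q hPQ => ?_
  ext x
  rw [hS P P.2, hS Q Q.2]
  exact hPQ

variable {G H A : Type*} [AddCommGroup G] [AddCommGroup H] [AddCommGroup A]

theorem card_degLE_succ_le [Finite H] [Finite A] (L : H →+ G) (e : G)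
    (hLe : ∀ g, ∃ x, g = L x ∨ g = L x + e) (r : ℕ) :
    Nat.card (degLE G A (r + 1)) ≤ Nat.card (degLE H A (r + 1)) * Nat.card (degLE H A r) := by
  have pullback {s : ℕ} {P : G → A} (hP : P ∈ degLE G A s) : (fun x => P (L x)) ∈ degLE H A s := by
    simpa using comp_mem_degLE L 0 hP
  rw [← Nat.card_prod]
  refine Nat.card_le_card_of_injective
    (fun P => (⟨⟨_, pullback P.2⟩, ⟨_, pullback (mem_degLE_succ.1 P.2 e)⟩⟩ :
      degLE H A (r + 1) × degLE H A r)) fun P Q hPQ => ?_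
  simp only [Prod.mk.injEq, Subtype.mk.injEq] at hPQ
  have eq_on (x : H) : P.1 (L x) = Q.1 (L x) := congrFun hPQ.1 x
  have eq_on_translate (x : H) : P.1 (L x + e) = Q.1 (L x + e) := by
    have := congrFun hPQ.2 x
    rwa [fwdDiff, fwdDiff, eq_on, sub_left_inj] at this
  ext g
  obtain ⟨x, rfl | rfl⟩ := hLe g
  exacts [eq_on x, eq_on_translate x]

theorem ncard_fwdDiff_image_mul_card_degLE_le [Finite G] [Finite A] {t : ℕ} (ys : Fin t → G)
    (L : G →+ H) (hL : Function.Surjective L) (hys : ∀ i, L (ys i) = 0) (r : ℕ) :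
    ((fun P i => Δ_[ys i] P) '' (degLE G A r : Set (G → A))).ncard * Nat.card (degLE H A r) ≤
      Nat.card (degLE G A r) := by
  let Φ : degLE G A r →+ (Fin t → G → A) :=
    (AddMonoidHom.pi fun i => fwdDiffHom (ys i)).comp (degLE G A r).subtype
  have card_range_mul_card_ker :
      Nat.card Φ.range * Nat.card Φ.ker = Nat.card (degLE G A r) := by
    rw [← AddSubgroup.index_ker, AddSubgroup.index_mul_card]
  have card_image_le :
      ((fun P i => Δ_[ys i] P) '' (degLE G A r : Set (G → A))).ncard ≤ Nat.card Φ.range := by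
    rw [← SetLike.coe_sort_coe, Nat.card_coe_set_eq]
    refine Set.ncard_le_ncard ?_ (Set.toFinite _)
    rintro _ ⟨P, hP, rfl⟩
    exact ⟨⟨P, hP⟩, rfl⟩
  have pullback_mem_ker (Q : degLE H A r) :
      ∃ h : (fun x => Q.1 (L x)) ∈ degLE G A r, ⟨_, h⟩ ∈ Φ.ker := by
    refine ⟨by simpa using comp_mem_degLE L 0 Q.2, AddMonoidHom.mem_ker.2 ?_⟩
    ext i x
    simp [Φ, fwdDiffHom, fwdDiff, hys]
  have card_le_card_ker : Nat.card (degLE H A r) ≤ Nat.card Φ.ker := by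
    refine Nat.card_le_card_of_injective
      (fun Q => (⟨_, (pullback_mem_ker Q).choose_spec⟩ : Φ.ker)) fun Q Q' h => ?_
    ext z
    obtain ⟨x, rfl⟩ := hL z
    exact congrFun (congrArg (fun P => P.1.1) h) x
  rw [← card_range_mul_card_ker]
  gcongr

end Cardinality

section Binomial

theorem binomLe_zero_right (m : ℕ) : binomLe m 0 = 1 := by simp [binomLe]

theorem binomLe_zero_left (r : ℕ) : binomLe 0 r = 1 := by
  rw [binomLe, sum_range_succ']
  simp

theorem binomLe_succ_succ (m r : ℕ) :
    binomLe (m + 1) (r + 1) = binomLe m (r + 1) + binomLe m r := by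
  unfold binomLe
  rw [sum_range_succ' _ (r + 1), sum_range_succ' (fun i => m.choose i) (r + 1)]
  simp only [Nat.choose_succ_succ, sum_add_distrib, Nat.choose_zero_right]
  lia

theorem binomLe_mono_right (m : ℕ) : Monotone (binomLe m) := fun _ _ h =>
  sum_le_sum_of_subset (range_mono (by lia))

theorem mul_binomLe_le_binomLe_succ {m r c : ℕ} (h : c * (r + 1) ≤ m - r) :
    c * binomLe m r ≤ binomLe m (r + 1) := by
  unfold binomLe
  rw [sum_range_succ' _ (r + 1), mul_sum]
  refine le_add_right (sum_le_sum fun i hi => ?_)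
  have hi' : i ≤ r := Nat.lt_succ_iff.1 (mem_range.1 hi)
  have h1 : c * (i + 1) ≤ m - i :=
    calc c * (i + 1) ≤ c * (r + 1) := by gcongr
      _ ≤ m - i := by lia
  refine Nat.le_of_mul_le_mul_right ?_ (Nat.succ_pos i)
  calc c * m.choose i * (i + 1) = m.choose i * (c * (i + 1)) := by ring
    _ ≤ m.choose i * (m - i) := by gcongr
    _ = m.choose (i + 1) * (i + 1) := (Nat.choose_succ_right_eq m i).symm

theorem binomLe_succ_mul_le (m r : ℕ) :
    binomLe (m + 1) r * (m + 1 - r) ≤ binomLe m r * (m + 1) := by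
  unfold binomLe
  rw [sum_mul, sum_mul]
  refine sum_le_sum fun i hi => ?_
  have hi' : i ≤ r := Nat.lt_succ_iff.1 (mem_range.1 hi)
  rw [Nat.choose_mul_succ_eq]
  gcongr

theorem binomLe_mul_pow_le (m r : ℕ) {x : ℝ} (h0 : 0 ≤ x) (h1 : x ≤ 1) :
    binomLe m r * x ^ r ≤ (1 + x) ^ m :=
  calc (binomLe m r : ℝ) * x ^ r = ∑ i ∈ range (r + 1), m.choose i * x ^ r := by
        rw [binomLe, Nat.cast_sum, sum_mul]
    _ ≤ ∑ i ∈ range (r + 1), m.choose i * x ^ i := by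
        refine sum_le_sum fun i hi => ?_
        have hi' : i ≤ r := Nat.lt_succ_iff.1 (mem_range.1 hi)
        exact mul_le_mul_of_nonneg_left (pow_le_pow_of_le_one h0 h1 hi') (Nat.cast_nonneg _)
    _ ≤ ∑ i ∈ range (max r m + 1), m.choose i * x ^ i :=
        sum_le_sum_of_subset_of_nonneg (range_mono (by lia)) fun _ _ _ => by positivity
    _ = ∑ i ∈ range (m + 1), m.choose i * x ^ i := by
        refine (sum_subset (range_mono (by lia)) fun i _ hi => ?_).symm
        rw [Nat.choose_eq_zero_of_lt (by simpa using hi), Nat.cast_zero, zero_mul]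
    _ = (1 + x) ^ m := by
        simp only [add_comm 1 x, add_pow, one_pow, mul_one, mul_comm]

theorem succ_le_binomLe {m r : ℕ} (h : 1 ≤ r) : m + 1 ≤ binomLe m r :=
  calc m + 1 = binomLe m 1 := by simp [binomLe, sum_range_succ, add_comm]
    _ ≤ binomLe m r := binomLe_mono_right m h

theorem sq_le_two_mul_binomLe {m r : ℕ} (h : 2 ≤ r) : m ^ 2 ≤ 2 * binomLe m r := by
  have choose_two : m.choose 2 * 2 = m * (m - 1) := by
    rw [Nat.choose_two_right, Nat.div_mul_cancel (Nat.even_mul_pred_self m).two_dvd]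
  calc m ^ 2 ≤ 2 * binomLe m 2 := by
        simp only [binomLe, sum_range_succ, range_zero, sum_empty, Nat.choose_zero_right,
          Nat.choose_one_right]
        cases m with
        | zero => simp
        | succ n =>
          rw [Nat.add_sub_cancel] at choose_two
          nlinarith
    _ ≤ 2 * binomLe m r := by
        gcongr
        exact binomLe_mono_right m h

theorem card_monIdx (m r : ℕ) : Fintype.card (MonIdx m r) = binomLe m r := by
  have eq_biUnion : (univ.filter fun S : Finset (Fin m) => S.card ≤ r) =
      (range (r + 1)).biUnion fun i => powersetCard i univ := by
    ext S
    simp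
  rw [Fintype.card_subtype, binomLe, eq_biUnion, card_biUnion]
  · simp
  · exact fun i _ j _ hij => pairwise_disjoint_powersetCard _ hij

end Binomial

section BooleanCube

theorem card_degLE_cube_le {A : Type*} [AddCommGroup A] [Finite A] (m r : ℕ) :
    Nat.card (degLE (Fin m → ZMod 2) A r) ≤ Nat.card A ^ binomLe m r := by
  induction m generalizing r with
  | zero =>
    rw [binomLe_zero_left, pow_one]
    exact card_le_of_forall_eq_const _ fun P _ x => congrArg P (Subsingleton.elim _ _)
  | succ m ih =>
    cases r with
    | zero =>
      rw [binomLe_zero_right, pow_one]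
      exact card_le_of_forall_eq_const _ fun P hP => mem_degLE_zero_iff_eq_const.1 hP
    | succ r =>
      let L : (Fin m → ZMod 2) →+ (Fin (m + 1) → ZMod 2) :=
        { toFun := Fin.cons (α := fun _ => ZMod 2) 0
          map_zero' := by
            ext i
            cases i using Fin.cases <;> simp
          map_add' := fun x y => by
            ext i
            cases i using Fin.cases <;> simp }
      have hLe (g : Fin (m + 1) → ZMod 2) : ∃ x, g = L x ∨ g = L x + Pi.single 0 1 := by
        refine ⟨Fin.tail g, ?_⟩
        have zero_or_one : ∀ a : ZMod 2, a = 0 ∨ a = 1 := by decide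
        refine (zero_or_one (g 0)).imp (fun h => ?_) fun h => ?_ <;>
        · ext i
          cases i using Fin.cases <;> simp [L, h, Fin.tail]
      calc Nat.card (degLE (Fin (m + 1) → ZMod 2) A (r + 1))
          ≤ Nat.card (degLE (Fin m → ZMod 2) A (r + 1)) * Nat.card (degLE (Fin m → ZMod 2) A r) :=
            card_degLE_succ_le L _ hLe r
        _ ≤ Nat.card A ^ binomLe m (r + 1) * Nat.card A ^ binomLe m r := by gcongr <;> apply ih
        _ = Nat.card A ^ binomLe (m + 1) (r + 1) := by rw [binomLe_succ_succ, pow_add]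

/-- The function on `F₂^m` given by the multilinear polynomial with coefficient vector `c`. -/
def evalFun (m r : ℕ) (c : RMcode m r) (z : Fin m → ZMod 2) : ZMod 2 := evalLin m r z c

theorem evalFun_apply {m r : ℕ} (c : RMcode m r) (z : Fin m → ZMod 2) :
    evalFun m r c z = ∑ S : MonIdx m r, (∏ i ∈ S.1, z i) * c S := by
  simp [evalFun, evalLin, LinearMap.sum_apply]

theorem prod_mem_degLE_card {m : ℕ} (S : Finset (Fin m)) :
    (fun z : Fin m → ZMod 2 => ∏ i ∈ S, z i) ∈ degLE (Fin m → ZMod 2) (ZMod 2) S.card := by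
  induction S using Finset.induction_on with
  | empty => exact mem_degLE_zero_iff_eq_const.2 fun _ => rfl
  | insert a S ha ih =>
    rw [card_insert_of_notMem ha]
    simp_rw [prod_insert ha]
    exact addMonoidHom_mul_mem_degLE_succ (Pi.evalAddMonoidHom (fun _ : Fin m => ZMod 2) a) ih

theorem evalFun_mem_degLE {m r : ℕ} (c : RMcode m r) :
    evalFun m r c ∈ degLE (Fin m → ZMod 2) (ZMod 2) r := by
  have : evalFun m r c =
      ∑ S : MonIdx m r, fun z : Fin m → ZMod 2 => c S * ∏ i ∈ S.1, z i := by
    ext z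
    simp only [evalFun_apply, Finset.sum_apply, mul_comm]
  rw [this]
  exact sum_mem fun S _ =>
    map_mem_degLE (AddMonoidHom.mulLeft (c S)) (degLE_mono S.2 (prod_mem_degLE_card S.1))

theorem evalFun_indicator {m r : ℕ} (c : RMcode m r) (T : Finset (Fin m)) :
    evalFun m r c (fun i => if i ∈ T then 1 else 0) = ∑ S : MonIdx m r with S.1 ⊆ T, c S := by
  rw [evalFun_apply, sum_filter]
  refine sum_congr rfl fun S _ => ?_
  split_ifs with hS
  · rw [prod_congr rfl fun i hi => if_pos (hS hi), prod_const_one, one_mul]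
  · obtain ⟨i, hi, hiT⟩ := not_subset.1 hS
    rw [prod_eq_zero hi (if_neg hiT), zero_mul]

theorem evalFun_injective (m r : ℕ) : Function.Injective (evalFun m r) := by
  intro c c' h
  ext ⟨T, hT⟩
  induction T using Finset.strongInduction with
  | H T ih =>
    have sum_eq := congrFun h fun i => if i ∈ T then 1 else 0
    have mem : (⟨T, hT⟩ : MonIdx m r) ∈ ({S | S.1 ⊆ T} : Finset (MonIdx m r)) := by simp
    rw [evalFun_indicator, evalFun_indicator, ← add_sum_erase _ _ mem, ← add_sum_erase _ _ mem,
      sum_congr rfl fun S hS => ?_] at sum_eq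
    · exact add_right_cancel sum_eq
    · obtain ⟨hne, hS⟩ := mem_erase.1 hS
      exact ih S.1 ((mem_filter.1 hS).2.ssubset_of_ne fun e => hne (Subtype.ext e)) S.2

theorem card_RMcode (m r : ℕ) : Fintype.card (RMcode m r) = 2 ^ binomLe m r := by
  rw [Fintype.card_fun, ZMod.card, card_monIdx]

theorem card_degLE_cube (m r : ℕ) :
    Nat.card (degLE (Fin m → ZMod 2) (ZMod 2) r) = 2 ^ binomLe m r := by
  refine le_antisymm ((card_degLE_cube_le m r).trans_eq (by rw [Nat.card_zmod])) ?_
  rw [← card_RMcode, ← Nat.card_eq_fintype_card]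
  exact Nat.card_le_card_of_injective
    (fun c => (⟨evalFun m r c, evalFun_mem_degLE c⟩ : degLE (Fin m → ZMod 2) (ZMod 2) r))
    fun c c' h => evalFun_injective m r (congrArg Subtype.val h)

theorem exists_linearMap_surjective_of_le_finrank {K V : Type*} [Field K] [AddCommGroup V]
    [Module K V] [Module.Finite K V] {k : ℕ} (h : k ≤ Module.finrank K V) :
    ∃ L : V →ₗ[K] (Fin k → K), Function.Surjective L := by
  refine ⟨LinearMap.funLeft K K (Fin.castLE h) ∘ₗ
    (Module.finBasis K V).equivFun.toLinearMap, ?_⟩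
  rw [LinearMap.coe_comp]
  exact (LinearMap.funLeft_surjective_of_injective _ _ _ (Fin.castLE_injective h)).comp
    (LinearEquiv.surjective _)

theorem exists_linearMap_surjective_vanishing {K V : Type*} [Field K] [AddCommGroup V]
    [Module K V] [Module.Finite K V] {k t : ℕ} (ys : Fin t → V)
    (h : k ≤ Module.finrank K V - t) :
    ∃ L : V →ₗ[K] (Fin k → K), Function.Surjective L ∧ ∀ i, L (ys i) = 0 := by
  let W := Submodule.span K (Set.range ys)
  have finrank_W : Module.finrank K W ≤ t :=
    (finrank_range_le_card (R := K) ys).trans_eq (Fintype.card_fin t)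
  have finrank_quotient := Submodule.finrank_quotient_add_finrank W
  obtain ⟨L, hL⟩ :=
    exists_linearMap_surjective_of_le_finrank (K := K) (V := V ⧸ W) (k := k) (by lia)
  refine ⟨L ∘ₗ W.mkQ, ?_, fun i => ?_⟩
  · rw [LinearMap.coe_comp]
    exact hL.comp (Submodule.mkQ_surjective W)
  · have : W.mkQ (ys i) = 0 := (Submodule.Quotient.mk_eq_zero W).2 (Submodule.subset_span ⟨i, rfl⟩)
    rw [LinearMap.comp_apply, this, map_zero]

theorem ncard_fwdDiff_image_cube_mul_le {m t : ℕ} (ys : Fin t → Fin m → ZMod 2) (r : ℕ) :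
    ((fun P i => Δ_[ys i] P) ''
        (degLE (Fin m → ZMod 2) (ZMod 2) r : Set ((Fin m → ZMod 2) → ZMod 2))).ncard *
      2 ^ binomLe (m - t) r ≤ 2 ^ binomLe m r := by
  obtain ⟨L, hL, hys⟩ := exists_linearMap_surjective_vanishing (K := ZMod 2) (k := m - t) ys
    (by rw [Module.finrank_fin_fun])
  rw [← card_degLE_cube, ← card_degLE_cube]
  exact ncard_fwdDiff_image_mul_card_degLE_le ys L.toAddMonoidHom hL hys r

end BooleanCube

section Counting

variable {G : Type*} [AddCommGroup G] [Fintype G]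

variable (G) in
open Classical in
/-- The `F₂`-valued functions of degree at most `r`, as a finite set. -/
noncomputable def degLEFinset (r : ℕ) : Finset (G → ZMod 2) := {P | P ∈ degLE G (ZMod 2) r}

variable (G) in
open Classical in
/-- The polynomials of degree at most `r` and fractional weight at most `δ`. -/
noncomputable def lowWeight (r : ℕ) (δ : ℝ) : Finset (G → ZMod 2) :=
  {P ∈ degLEFinset G r | fracWeight P ≤ δ}

variable (G) in
open Classical in
/-- The polynomials of degree at most `r` and bias more than `δ`. -/
noncomputable def biased (r : ℕ) (δ : ℝ) : Finset (G → ZMod 2) :=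
  {P ∈ degLEFinset G r | δ < bias P}

theorem mem_degLEFinset {r : ℕ} {P : G → ZMod 2} :
    P ∈ degLEFinset G r ↔ P ∈ degLE G (ZMod 2) r := by
  simp [degLEFinset]

theorem mem_lowWeight {r : ℕ} {δ : ℝ} {P : G → ZMod 2} :
    P ∈ lowWeight G r δ ↔ P ∈ degLE G (ZMod 2) r ∧ fracWeight P ≤ δ := by
  simp [lowWeight, mem_degLEFinset]

theorem mem_biased {r : ℕ} {δ : ℝ} {P : G → ZMod 2} :
    P ∈ biased G r δ ↔ P ∈ degLE G (ZMod 2) r ∧ δ < bias P := by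
  simp [biased, mem_degLEFinset]

theorem lowWeight_subset (r : ℕ) (δ : ℝ) : lowWeight G r δ ⊆ degLEFinset G r := filter_subset _ _

theorem biased_subset (r : ℕ) (δ : ℝ) : biased G r δ ⊆ degLEFinset G r := filter_subset _ _

theorem card_lowWeight_le_one {r : ℕ} {δ : ℝ} (h : δ < (1 / 2) ^ r) : #(lowWeight G r δ) ≤ 1 := by
  have eq_zero {P : G → ZMod 2} (hP : P ∈ lowWeight G r δ) : P = 0 :=
    eq_zero_of_fracWeight_lt (mem_lowWeight.1 hP).1 ((mem_lowWeight.1 hP).2.trans_lt h)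
  exact card_le_one.2 fun P hP Q hQ => by rw [eq_zero hP, eq_zero hQ]

theorem card_le_card_lowWeight_of_fwdDiff_eq {t r : ℕ} {e : ℝ} {S : Finset (G → ZMod 2)}
    (hS : S ⊆ degLEFinset G r) (ys : Fin t → G) (herr : ∀ P ∈ S, errorRate ys P ≤ e)
    {D : Fin t → G → ZMod 2} (hD : ∀ P ∈ S, ∀ i, Δ_[ys i] P = D i) :
    #S ≤ #(lowWeight G r (2 * e)) := by
  obtain rfl | ⟨Q, hQ⟩ := S.eq_empty_or_nonempty
  · simp
  refine card_le_card_of_injOn (· + Q) (fun P hP => ?_) (add_left_injective Q).injOn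
  refine mem_lowWeight.2 ⟨add_mem (mem_degLEFinset.1 (hS hP)) (mem_degLEFinset.1 (hS hQ)), ?_⟩
  calc fracWeight (P + Q) ≤ errorRate ys P + errorRate ys Q :=
        fracWeight_add_le_of_fwdDiff_eq ys fun i => (hD P hP i).trans (hD Q hQ i).symm
    _ ≤ 2 * e := by linarith [herr P hP, herr Q hQ]

theorem card_le_card_lowWeight_mul {t r I : ℕ} {e : ℝ} {S : Finset (G → ZMod 2)}
    (hS : S ⊆ degLEFinset G r) (herr : ∀ P ∈ S, ∃ ys : Fin t → G, errorRate ys P ≤ e)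
    (hI : ∀ ys : Fin t → G, ((fun P i => Δ_[ys i] P) '' (S : Set (G → ZMod 2))).ncard ≤ I) :
    #S ≤ #(lowWeight G r (2 * e)) * I * Fintype.card G ^ t := by
  classical
  choose! ys hys using herr
  calc #S ≤ #(lowWeight G r (2 * e)) * I * #(S.image ys) := card_le_mul_card_image _ _ fun z _ => ?_
    _ ≤ #(lowWeight G r (2 * e)) * I * Fintype.card G ^ t := by
        gcongr
        exact (card_le_univ _).trans_eq (by simp)
  have hsub : ({P ∈ S | ys P = z} : Finset (G → ZMod 2)) ⊆ S := filter_subset _ _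
  calc #{P ∈ S | ys P = z}
      ≤ #(lowWeight G r (2 * e)) * #(({P ∈ S | ys P = z}).image fun P i => Δ_[z i] P) :=
        card_le_mul_card_image _ _ fun D _ =>
          card_le_card_lowWeight_of_fwdDiff_eq (((filter_subset _ _).trans hsub).trans hS) z
            (fun P hP => by
              obtain ⟨hPS, rfl⟩ := mem_filter.1 (mem_filter.1 hP).1
              exact hys P hPS)
            fun P hP i => congrFun (mem_filter.1 hP).2 i
    _ ≤ #(lowWeight G r (2 * e)) * I := by
        gcongr
        rw [← Set.ncard_coe_finset, coe_image]
        exact (Set.ncard_le_ncard (Set.image_mono (coe_subset.2 hsub))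
          (Set.toFinite _)).trans (hI z)

theorem card_lowWeight_succ_le {r : ℕ} {δ : ℝ} (hδ : δ ≤ 1 / 4) :
    #(lowWeight G (r + 1) δ) ≤
      #(lowWeight G (r + 1) (δ / 2)) * #(lowWeight G r (2 * δ)) ^ 6 * Fintype.card G ^ 6 := by
  classical
  have exists_errorRate_le (P : G → ZMod 2) (hP : P ∈ lowWeight G (r + 1) δ) :
      ∃ ys : Fin 6 → G, errorRate ys P ≤ δ / 4 := by
    have hw := (mem_lowWeight.1 hP).2
    have hbias := bias_eq P
    obtain ⟨ys, hys⟩ := exists_errorRate_mul_bias_sq_le P (by linarith) 6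
    refine ⟨ys, ?_⟩
    have hsq : 1 / 4 ≤ bias P ^ 2 := by nlinarith
    nlinarith [mul_le_mul_of_nonneg_left hsq (errorRate_nonneg ys P), sq_nonneg (fracWeight P)]
  rw [show δ / 2 = 2 * (δ / 4) by ring]
  refine card_le_card_lowWeight_mul (lowWeight_subset _ _) exists_errorRate_le fun ys => ?_
  calc _ ≤ #(Fintype.piFinset fun _ : Fin 6 => lowWeight G r (2 * δ)) := ?_
    _ = _ := by rw [Fintype.card_piFinset, prod_const, card_univ, Fintype.card_fin]
  rw [← Set.ncard_coe_finset]
  refine Set.ncard_le_ncard ?_ (Set.toFinite _)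
  rintro _ ⟨P, hP, rfl⟩
  obtain ⟨hdeg, hw⟩ := mem_lowWeight.1 (mem_coe.1 hP)
  refine mem_coe.2 (Fintype.mem_piFinset.2 fun i => mem_lowWeight.2 ⟨mem_degLE_succ.1 hdeg _, ?_⟩)
  exact (fracWeight_fwdDiff_le P _).trans (by gcongr)

theorem card_biased_mul_le (m r t : ℕ) {δ : ℝ} (hδ : 0 < δ) :
    #(biased (Fin m → ZMod 2) r δ) * 2 ^ binomLe (m - t) r ≤
      #(lowWeight (Fin m → ZMod 2) r (2 * (1 / (2 ^ t * δ ^ 2)))) * 2 ^ binomLe m r *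
        (2 ^ m) ^ t := by
  have exists_errorRate_le (P : (Fin m → ZMod 2) → ZMod 2) (hP : P ∈ biased _ r δ) :
      ∃ ys : Fin t → Fin m → ZMod 2, errorRate ys P ≤ 1 / (2 ^ t * δ ^ 2) := by
    have hb := (mem_biased.1 hP).2
    obtain ⟨ys, hys⟩ := exists_errorRate_mul_bias_sq_le P (hδ.trans hb).le t
    refine ⟨ys, ?_⟩
    have herr := errorRate_nonneg ys P
    rw [← div_div, le_div_iff₀ (by positivity)]
    calc errorRate ys P * δ ^ 2 ≤ errorRate ys P * bias P ^ 2 := by gcongr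
      _ ≤ (1 - bias P ^ 2) / 2 ^ t := hys
      _ ≤ 1 / 2 ^ t := by gcongr; linarith [sq_nonneg (bias P)]
  have ncard_image_le (ys : Fin t → Fin m → ZMod 2) :
      ((fun P i => Δ_[ys i] P) ''
          (biased (Fin m → ZMod 2) r δ : Set ((Fin m → ZMod 2) → ZMod 2))).ncard ≤
        2 ^ binomLe m r / 2 ^ binomLe (m - t) r := by
    refine (Nat.le_div_iff_mul_le (by positivity)).2
      (le_trans ?_ (ncard_fwdDiff_image_cube_mul_le ys r))
    gcongr
    · exact Set.toFinite _
    · exact fun P hP => (mem_biased.1 (mem_coe.1 hP)).1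
  have card_biased_le :=
    card_le_card_lowWeight_mul (biased_subset r δ) exists_errorRate_le ncard_image_le
  have card_cube : Fintype.card (Fin m → ZMod 2) = 2 ^ m := by simp
  rw [card_cube] at card_biased_le
  generalize #(lowWeight (Fin m → ZMod 2) r _) = W at card_biased_le ⊢
  calc #(biased (Fin m → ZMod 2) r δ) * 2 ^ binomLe (m - t) r
      ≤ W * (2 ^ binomLe m r / 2 ^ binomLe (m - t) r) * (2 ^ m) ^ t * 2 ^ binomLe (m - t) r := by
        gcongr
    _ = W * (2 ^ binomLe m r / 2 ^ binomLe (m - t) r * 2 ^ binomLe (m - t) r) * (2 ^ m) ^ t := by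
        ring
    _ ≤ W * 2 ^ binomLe m r * (2 ^ m) ^ t := by gcongr; exact Nat.div_mul_le_self _ _

theorem card_degLEFinset_cube (m r : ℕ) :
    #(degLEFinset (Fin m → ZMod 2) r) = 2 ^ binomLe m r := by
  classical
  rw [← card_degLE_cube, Nat.card_eq_fintype_card, ← Fintype.card_coe]
  exact Fintype.card_congr (Equiv.subtypeEquivRight fun _ => mem_degLEFinset)

theorem sum_evalFun_eq (m r : ℕ) (f : ((Fin m → ZMod 2) → ZMod 2) → ℝ) :
    ∑ c : RMcode m r, f (evalFun m r c) = ∑ P ∈ degLEFinset (Fin m → ZMod 2) r, f P := by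
  classical
  have image_evalFun : univ.image (evalFun m r) = degLEFinset (Fin m → ZMod 2) r := by
    refine eq_of_subset_of_card_le
      (image_subset_iff.2 fun c _ => mem_degLEFinset.2 (evalFun_mem_degLE c)) ?_
    rw [card_degLEFinset_cube, card_image_of_injective _ (evalFun_injective m r), card_univ,
      card_RMcode]
  rw [← image_evalFun, sum_image (evalFun_injective m r).injOn]

end Counting

section LowWeight

theorem pow_mul_le_binomLe_succ {m r : ℕ} (h : 2000 * (r + 1) ≤ m) :
    500 ^ r * m ≤ binomLe m (r + 1) := by
  induction r with
  | zero => simpa using (Nat.le_succ m).trans (succ_le_binomLe le_rfl)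
  | succ r ih =>
    calc 500 ^ (r + 1) * m = 500 * (500 ^ r * m) := by ring
      _ ≤ 500 * binomLe m (r + 1) := by gcongr; exact ih (by lia)
      _ ≤ binomLe m (r + 2) := mul_binomLe_le_binomLe_succ (by lia)

theorem mul_le_binomLe_mul_pow {m r i : ℕ} (hm : 2000 * (r + 1) ≤ m) (hi : i + 1 ≤ r) :
    500 * (m : ℝ) ≤ binomLe m (r + 1) * (1 / 16) ^ i := by
  have pow_le : (500 : ℝ) * 16 ^ i ≤ 500 ^ r :=
    calc (500 : ℝ) * 16 ^ i ≤ 500 * 500 ^ i := by gcongr; norm_num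
      _ = 500 ^ (i + 1) := by ring
      _ ≤ 500 ^ r := by gcongr; norm_num
  rw [one_div, inv_pow, ← div_eq_mul_inv, le_div_iff₀ (by positivity)]
  calc 500 * (m : ℝ) * 16 ^ i = 500 * 16 ^ i * m := by ring
    _ ≤ 500 ^ r * m := by gcongr
    _ ≤ binomLe m (r + 1) := by exact_mod_cast pow_mul_le_binomLe_succ hm

theorem card_lowWeight_succ_le_two_rpow {m r i : ℕ} (hm : 2000 * (r + 1) ≤ m) (hi : i + 1 ≤ r)
    (hweight : (#(lowWeight (Fin m → ZMod 2) (r + 1) ((1 / 2) ^ (i + 3))) : ℝ) ≤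
      2 ^ ((binomLe m (r + 1) : ℝ) * (1 / 16) ^ (i + 2)))
    (hdeg : (#(lowWeight (Fin m → ZMod 2) r ((1 / 2) ^ (i + 1))) : ℝ) ≤
      2 ^ ((binomLe m r : ℝ) * (1 / 16) ^ i)) :
    (#(lowWeight (Fin m → ZMod 2) (r + 1) ((1 / 2) ^ (i + 2))) : ℝ) ≤
      2 ^ ((binomLe m (r + 1) : ℝ) * (1 / 16) ^ (i + 1)) := by
  have recursion : (#(lowWeight (Fin m → ZMod 2) (r + 1) ((1 / 2) ^ (i + 2))) : ℝ) ≤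
      #(lowWeight (Fin m → ZMod 2) (r + 1) ((1 / 2) ^ (i + 3))) *
        #(lowWeight (Fin m → ZMod 2) r ((1 / 2) ^ (i + 1))) ^ 6 * (2 ^ m) ^ 6 := by
    have quarter : (1 / 2 : ℝ) ^ (i + 2) ≤ 1 / 4 := by
      rw [pow_add]
      linarith [pow_le_one₀ (n := i) (by norm_num : (0 : ℝ) ≤ 1 / 2) (by norm_num)]
    have h := card_lowWeight_succ_le (G := Fin m → ZMod 2) (r := r) quarter
    rw [show (1 / 2 : ℝ) ^ (i + 2) / 2 = (1 / 2) ^ (i + 3) by ring,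
      show 2 * (1 / 2 : ℝ) ^ (i + 2) = (1 / 2) ^ (i + 1) by ring,
      show Fintype.card (Fin m → ZMod 2) = 2 ^ m by simp] at h
    exact_mod_cast h
  set D : ℝ := (binomLe m (r + 1) : ℝ) with hD
  have degree_drop : 500 * (binomLe m r : ℝ) ≤ D := by
    rw [hD]
    exact_mod_cast mul_binomLe_le_binomLe_succ (m := m) (r := r) (c := 500) (by lia)
  calc (#(lowWeight (Fin m → ZMod 2) (r + 1) ((1 / 2) ^ (i + 2))) : ℝ)
      ≤ 2 ^ (D * (1 / 16) ^ (i + 2)) * (2 ^ ((binomLe m r : ℝ) * (1 / 16) ^ i)) ^ 6 *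
        (2 ^ m) ^ 6 := recursion.trans (by gcongr)
    _ = 2 ^ (D * (1 / 16) ^ (i + 2) + (binomLe m r : ℝ) * (1 / 16) ^ i * 6 + m * 6) := by
        rw [Real.rpow_add two_pos, Real.rpow_add two_pos, Real.rpow_mul two_pos.le _ 6,
          Real.rpow_mul two_pos.le _ 6, Real.rpow_natCast 2 m]
        norm_cast
    _ ≤ 2 ^ (D * (1 / 16) ^ (i + 1)) := by
        refine Real.rpow_le_rpow_of_exponent_le one_le_two ?_
        have room := mul_le_binomLe_mul_pow hm hi
        have pow_pos : (0 : ℝ) < (1 / 16) ^ i := by positivity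
        rw [pow_add, pow_succ _ i]
        nlinarith [mul_le_mul_of_nonneg_right degree_drop pow_pos.le]

theorem card_lowWeight_le_two_rpow {m r : ℕ} (hm : 2000 * r ≤ m) (i : ℕ) :
    (#(lowWeight (Fin m → ZMod 2) r ((1 / 2) ^ (i + 1))) : ℝ) ≤
      2 ^ ((binomLe m r : ℝ) * (1 / 16) ^ i) := by
  by_cases hri : r ≤ i
  · have half_pow_lt : (1 / 2 : ℝ) ^ (i + 1) < (1 / 2) ^ r :=
      pow_lt_pow_right_of_lt_one₀ (by norm_num) (by norm_num) (by lia)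
    calc (#(lowWeight (Fin m → ZMod 2) r ((1 / 2) ^ (i + 1))) : ℝ) ≤ 1 := by
          exact_mod_cast card_lowWeight_le_one half_pow_lt
      _ ≤ _ := Real.one_le_rpow one_le_two (by positivity)
  match r, i with
  | r, 0 =>
    rw [pow_zero, mul_one, Real.rpow_natCast]
    exact_mod_cast (card_le_card (lowWeight_subset r _)).trans_eq (card_degLEFinset_cube m r)
  | 0, i + 1 => lia
  | r + 1, i + 1 =>
    exact card_lowWeight_succ_le_two_rpow hm (by lia) (card_lowWeight_le_two_rpow hm (i + 2))
      (card_lowWeight_le_two_rpow (by lia) i)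
termination_by 2 * r - i

theorem pow_mul_binomLe_le_binomLe_sub {m r t : ℕ} (ht : t ≤ m) (h : 500 * r ≤ m - t) :
    (499 / 500 : ℝ) ^ t * binomLe m r ≤ binomLe (m - t) r := by
  induction t with
  | zero => simp
  | succ t ih =>
    obtain ⟨n, hn⟩ : ∃ n, m - t = n + 1 := ⟨m - t - 1, by lia⟩
    rw [show m - (t + 1) = n by lia] at h ⊢
    have hr : 500 * (r : ℝ) ≤ n := by exact_mod_cast h
    have drop : (binomLe (n + 1) r : ℝ) * (n + 1 - r) ≤ binomLe n r * (n + 1) := by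
      have := binomLe_succ_mul_le n r
      rw [← Nat.cast_le (α := ℝ)] at this
      push_cast [Nat.cast_sub (show r ≤ n + 1 by lia)] at this
      exact this
    have ratio : 499 / 500 * (binomLe (n + 1) r : ℝ) ≤ binomLe n r := by
      refine le_of_mul_le_mul_right (le_trans ?_ drop) (by positivity : (0 : ℝ) < n + 1)
      nlinarith [Nat.cast_nonneg (α := ℝ) (binomLe (n + 1) r)]
    calc (499 / 500 : ℝ) ^ (t + 1) * binomLe m r
        = 499 / 500 * ((499 / 500) ^ t * binomLe m r) := by ring
      _ ≤ 499 / 500 * binomLe (m - t) r := by gcongr; exact ih (by lia) (by lia)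
      _ ≤ binomLe n r := by rwa [hn]

end LowWeight

section Expectation

/-- The expectation of `|I_r(Z)| / 2 ^ binom(m, ≤ r)` over a uniformly random `K`-element set
`Z ⊆ F₂^m`; the division gives the junk value `0` when `2 ^ m < K`. -/
noncomputable def expectedVanishingSize (m r K : ℕ) : ℝ :=
  (∑ Z ∈ (univ : Finset (Fin m → ZMod 2)).powersetCard K,
    (Nat.card (vanishing m r (Z : Set (Fin m → ZMod 2))) : ℝ) / 2 ^ binomLe m r) /
      (#((univ : Finset (Fin m → ZMod 2)).powersetCard K) : ℝ)

theorem mem_vanishing {m r : ℕ} {Z : Set (Fin m → ZMod 2)} {c : RMcode m r} :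
    c ∈ vanishing m r Z ↔ ∀ z ∈ Z, evalLin m r z c = 0 := by
  simp [vanishing]

theorem two_pow_le_card_vanishing_mul (m r : ℕ) (Z : Finset (Fin m → ZMod 2)) :
    2 ^ binomLe m r ≤ Nat.card (vanishing m r (Z : Set (Fin m → ZMod 2))) * 2 ^ #Z := by
  let restrict : RMcode m r →ₗ[ZMod 2] (Z → ZMod 2) := LinearMap.pi fun z => evalLin m r z
  have ker_restrict :
      LinearMap.ker restrict = vanishing m r (Z : Set (Fin m → ZMod 2)) := by
    ext c
    rw [mem_vanishing, LinearMap.mem_ker, funext_iff]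
    simp [restrict]
  have card_quotient : Nat.card (RMcode m r ⧸ LinearMap.ker restrict) ≤ 2 ^ #Z := by
    rw [Nat.card_congr restrict.quotKerEquivRange.toEquiv]
    refine (Nat.card_le_card_of_injective _ Subtype.val_injective).trans_eq ?_
    rw [Nat.card_eq_fintype_card, Fintype.card_fun, ZMod.card, Fintype.card_coe]
  calc 2 ^ binomLe m r = Nat.card (RMcode m r) := by
        rw [Nat.card_eq_fintype_card, card_RMcode]
    _ = Nat.card (LinearMap.ker restrict) * Nat.card (RMcode m r ⧸ LinearMap.ker restrict) :=
        Submodule.card_eq_card_quotient_mul_card _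
    _ ≤ _ := by
        rw [ker_restrict] at card_quotient ⊢
        gcongr

theorem sum_card_vanishing (m r K : ℕ) :
    ∑ Z ∈ (univ : Finset (Fin m → ZMod 2)).powersetCard K,
      Nat.card (vanishing m r (Z : Set (Fin m → ZMod 2))) =
    ∑ c : RMcode m r, (numZeros m r c).choose K := by
  classical
  have card_vanishing (Z : Finset (Fin m → ZMod 2)) :
      Nat.card (vanishing m r (Z : Set (Fin m → ZMod 2))) =
        ∑ c : RMcode m r, if ∀ z ∈ Z, evalLin m r z c = 0 then 1 else 0 := by
    rw [← card_filter, ← Fintype.card_subtype, ← Nat.card_eq_fintype_card]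
    exact Nat.card_congr (Equiv.subtypeEquivRight fun c => mem_vanishing)
  simp_rw [card_vanishing]
  rw [sum_comm]
  refine sum_congr rfl fun c _ => ?_
  rw [← card_filter, numZeros, ← card_powersetCard]
  congr 1
  ext Z
  simp only [mem_filter, mem_powersetCard, subset_iff, mem_univ, true_and]
  exact ⟨fun h => ⟨h.2, h.1.2⟩, fun h => ⟨⟨fun _ _ => trivial, h.2⟩, h.1⟩⟩

theorem choose_mul_pow_le {a N : ℕ} (h : a ≤ N) (K : ℕ) :
    a.choose K * N ^ K ≤ N.choose K * a ^ K := by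
  have descFactorial_mul_le : a.descFactorial K * N ^ K ≤ N.descFactorial K * a ^ K := by
    induction K with
    | zero => simp
    | succ K ih =>
      have factor_le : (a - K) * N ≤ (N - K) * a := by
        rw [Nat.sub_mul, Nat.sub_mul, mul_comm a N]
        exact Nat.sub_le_sub_left (Nat.mul_le_mul_left K h) _
      calc a.descFactorial (K + 1) * N ^ (K + 1)
          = ((a - K) * N) * (a.descFactorial K * N ^ K) := by rw [Nat.descFactorial_succ]; ring
        _ ≤ ((N - K) * a) * (N.descFactorial K * a ^ K) := by gcongr
        _ = N.descFactorial (K + 1) * a ^ (K + 1) := by rw [Nat.descFactorial_succ]; ring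
  rw [Nat.descFactorial_eq_factorial_mul_choose, Nat.descFactorial_eq_factorial_mul_choose,
    mul_assoc, mul_assoc] at descFactorial_mul_le
  exact Nat.le_of_mul_le_mul_left descFactorial_mul_le (Nat.factorial_pos K)

theorem numZeros_eq (m r : ℕ) (c : RMcode m r) :
    (numZeros m r c : ℝ) = (1 + bias (evalFun m r c)) / 2 * 2 ^ m := by
  have sum_sgn : ∑ z, sgn (evalFun m r c z) = 2 ^ m * bias (evalFun m r c) := by
    simpa [bias] using (Fintype.card_mul_expect fun z => sgn (evalFun m r c z)).symm
  have sgn_add_one (z : Fin m → ZMod 2) :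
      sgn (evalFun m r c z) + 1 = 2 * if evalLin m r z c = 0 then 1 else 0 := by
    rw [sgn_eq_ite, evalFun]
    split_ifs <;> norm_num
  have two_mul_numZeros : ∑ z, (sgn (evalFun m r c z) + 1) = 2 * numZeros m r c := by
    simp_rw [sgn_add_one, ← mul_sum, numZeros, sum_boole]
  simp only [sum_add_distrib, sum_sgn, sum_const, card_univ, Fintype.card_fun, ZMod.card,
    Fintype.card_fin, nsmul_eq_mul, Nat.cast_pow, Nat.cast_ofNat, mul_one] at two_mul_numZeros
  linarith

theorem binomLe_le_two_pow (m r : ℕ) : binomLe m r ≤ 2 ^ m := by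
  have := binomLe_mul_pow_le m r zero_le_one le_rfl
  rw [one_pow, mul_one, one_add_one_eq_two] at this
  exact_mod_cast this

theorem inv_two_pow_le_expectedVanishingSize {m r K : ℕ} (hK : K ≤ binomLe m r) :
    ((2 : ℝ) ^ K)⁻¹ ≤ expectedVanishingSize m r K := by
  have card_pos : 0 < #((univ : Finset (Fin m → ZMod 2)).powersetCard K) := by
    simpa using Nat.choose_pos (hK.trans (binomLe_le_two_pow m r))
  rw [expectedVanishingSize, le_div_iff₀ (by exact_mod_cast card_pos), mul_comm, ← nsmul_eq_mul]
  refine card_nsmul_le_sum _ _ _ fun Z hZ => ?_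
  rw [le_div_iff₀ (by positivity), inv_mul_le_iff₀ (by positivity), mul_comm,
    ← (mem_powersetCard.1 hZ).2]
  exact_mod_cast two_pow_le_card_vanishing_mul m r Z

theorem choose_numZeros_le (m r K : ℕ) (c : RMcode m r) :
    ((numZeros m r c).choose K : ℝ) ≤
      (2 ^ m).choose K * ((1 + bias (evalFun m r c)) ^ K / 2 ^ K) := by
  have card_le : numZeros m r c ≤ 2 ^ m := (card_le_univ _).trans_eq (by simp)
  have choose_le : ((numZeros m r c).choose K : ℝ) * (2 ^ m) ^ K ≤
      (2 ^ m).choose K * (numZeros m r c : ℝ) ^ K := by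
    exact_mod_cast choose_mul_pow_le card_le K
  rw [numZeros_eq, mul_pow, ← mul_assoc, div_pow] at choose_le
  exact le_of_mul_le_mul_right choose_le (by positivity)

theorem expectedVanishingSize_le {m r K : ℕ} (hK : K ≤ binomLe m r) :
    expectedVanishingSize m r K ≤ ((2 : ℝ) ^ K)⁻¹ *
      ((∑ P ∈ degLEFinset (Fin m → ZMod 2) r, (1 + bias P) ^ K) / 2 ^ binomLe m r) := by
  have choose_pos : (0 : ℝ) < (2 ^ m).choose K := by
    exact_mod_cast Nat.choose_pos (hK.trans (binomLe_le_two_pow m r))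
  calc expectedVanishingSize m r K
      = (∑ c : RMcode m r, ((numZeros m r c).choose K : ℝ)) / 2 ^ binomLe m r /
          (2 ^ m).choose K := by
        rw [expectedVanishingSize, ← sum_div, ← Nat.cast_sum, sum_card_vanishing,
          card_powersetCard]
        simp
    _ ≤ (∑ c : RMcode m r, (2 ^ m).choose K * ((1 + bias (evalFun m r c)) ^ K / 2 ^ K)) /
          2 ^ binomLe m r / (2 ^ m).choose K := by
        gcongr with c
        exact choose_numZeros_le m r K c
    _ = ((2 : ℝ) ^ K)⁻¹ *
          ((∑ P ∈ degLEFinset (Fin m → ZMod 2) r, (1 + bias P) ^ K) / 2 ^ binomLe m r) := by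
        rw [← sum_evalFun_eq m r fun P => (1 + bias P) ^ K, ← mul_sum, ← sum_div]
        field_simp

end Expectation

section Moment

theorem exists_half_pow_lt_bias {G : Type*} [Fintype G] {P : G → ZMod 2} {L : ℕ}
    (h : (1 / 2) ^ (L + 1) < bias P) (hhalf : bias P ≤ 1 / 2) :
    ∃ l < L, (1 / 2) ^ (l + 2) < bias P ∧ bias P ≤ (1 / 2) ^ (l + 1) := by
  have bias_pos : 0 < bias P := h.trans' (by positivity)
  obtain ⟨l, hlt, hle⟩ := exists_nat_pow_near_of_lt_one (by linarith : 0 < 2 * bias P)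
    (by linarith : 2 * bias P ≤ 1) (by norm_num : (0 : ℝ) < 1 / 2) (by norm_num)
  have hle' : bias P ≤ (1 / 2) ^ (l + 1) := by rw [pow_succ]; linarith
  refine ⟨l, ?_, by rw [pow_succ]; linarith, hle'⟩
  have := (pow_lt_pow_iff_right_of_lt_one₀ (by norm_num) (by norm_num)).1 (h.trans_le hle')
  lia

variable {G : Type*} [AddCommGroup G] [Fintype G] {P : G → ZMod 2}

theorem one_add_bias_pow_le {x : ℝ} (h : bias P ≤ x) (K : ℕ) : (1 + bias P) ^ K ≤ (1 + x) ^ K :=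
  pow_le_pow_left₀ (by linarith [neg_one_le_bias P]) (by linarith) K

theorem one_add_bias_pow_le_two_pow (P : G → ZMod 2) (K : ℕ) : (1 + bias P) ^ K ≤ 2 ^ K :=
  (one_add_bias_pow_le (bias_le_one P) K).trans_eq (by rw [one_add_one_eq_two])

theorem one_add_bias_pow_le_exp {x : ℝ} (h : bias P ≤ x) (K : ℕ) :
    (1 + bias P) ^ K ≤ Real.exp (x * K) :=
  calc (1 + bias P) ^ K ≤ Real.exp x ^ K :=
        pow_le_pow_left₀ (by linarith [neg_one_le_bias P]) (by linarith [Real.add_one_le_exp x]) K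
    _ = Real.exp (x * K) := by rw [← Real.exp_nat_mul, mul_comm]

theorem sum_one_add_bias_pow_le_of_degree_one (K : ℕ) :
    ∑ P ∈ degLEFinset G 1, (1 + bias P) ^ K ≤ #(degLEFinset G 1) + 2 ^ K := by
  classical
  have pointwise (P : G → ZMod 2) (hP : P ∈ degLEFinset G 1) :
      (1 + bias P) ^ K ≤ 1 + if P = 0 then 2 ^ K else 0 := by
    by_cases hb : 0 < bias P
    · rw [if_pos (eq_zero_of_bias_pos_of_mem_degLE_one (mem_degLEFinset.1 hP) hb)]
      linarith [one_add_bias_pow_le_two_pow P K]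
    · have h := one_add_bias_pow_le (not_lt.1 hb) K
      rw [add_zero, one_pow] at h
      exact h.trans (le_add_of_nonneg_right (by positivity))
  calc ∑ P ∈ degLEFinset G 1, (1 + bias P) ^ K
      ≤ ∑ P ∈ degLEFinset G 1, (1 + if P = 0 then (2 : ℝ) ^ K else 0) := sum_le_sum pointwise
    _ = #(degLEFinset G 1) + 2 ^ K := by
        rw [sum_add_distrib, sum_const, nsmul_one, sum_ite_eq',
          if_pos (mem_degLEFinset.2 (zero_mem _))]

theorem exists_half_pow_lt_fracWeight {r : ℕ} (hP : P ∈ degLE G (ZMod 2) r)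
    (hhalf : 1 / 2 < bias P) (h0 : P ≠ 0) :
    ∃ i < r, (1 / 2) ^ (i + 3) < fracWeight P ∧ fracWeight P ≤ (1 / 2) ^ (i + 2) := by
  have min_weight : (1 / 2) ^ r ≤ fracWeight P :=
    not_lt.1 fun h => h0 (eq_zero_of_fracWeight_lt hP h)
  have weight_pos : 0 < fracWeight P := min_weight.trans_lt' (by positivity)
  have hbias := bias_eq P
  obtain ⟨i, hlt, hle⟩ := exists_nat_pow_near_of_lt_one (by linarith : 0 < 4 * fracWeight P)
    (by linarith : 4 * fracWeight P ≤ 1) (by norm_num : (0 : ℝ) < 1 / 2) (by norm_num)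
  have hle' : fracWeight P ≤ (1 / 2) ^ (i + 2) := by rw [pow_add]; linarith
  refine ⟨i, ?_, by rw [show i + 3 = i + 1 + 2 by ring, pow_add]; linarith, hle'⟩
  have := (pow_le_pow_iff_right_of_lt_one₀ (by norm_num) (by norm_num)).1 (min_weight.trans hle')
  lia

open Classical in
theorem one_add_bias_pow_le_sum {r L K : ℕ} {A : ℝ} (hP : P ∈ degLEFinset G r)
    (hA : Real.exp ((1 / 2) ^ (L + 1) * K) ≤ A) :
    (1 + bias P) ^ K ≤ A +
      ∑ l ∈ range L, (if P ∈ biased G r ((1 / 2) ^ (l + 2)) then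
        Real.exp ((1 / 2) ^ (l + 1) * K) else 0) +
      ∑ i ∈ range r, (if P ∈ lowWeight G r ((1 / 2) ^ (i + 2)) then
        (2 * (1 - (1 / 2 : ℝ) ^ (i + 3))) ^ K else 0) +
      if P = 0 then 2 ^ K else 0 := by
  have biased_nonneg : ∀ l ∈ range L, 0 ≤ (if P ∈ biased G r ((1 / 2) ^ (l + 2)) then
      Real.exp ((1 / 2) ^ (l + 1) * K) else 0) := fun l _ => by positivity
  have lowWeight_nonneg : ∀ i ∈ range r, 0 ≤ (if P ∈ lowWeight G r ((1 / 2) ^ (i + 2)) then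
      (2 * (1 - (1 / 2 : ℝ) ^ (i + 3))) ^ K else 0) := fun i _ => by
    have : (1 / 2 : ℝ) ^ (i + 3) ≤ 1 := pow_le_one₀ (by norm_num) (by norm_num)
    split_ifs
    exacts [pow_nonneg (by linarith) K, le_rfl]
  have le_sum_of_le_summand {x a b c d : ℝ} (ha : 0 ≤ a) (hb : 0 ≤ b) (hc : 0 ≤ c) (hd : 0 ≤ d)
      (h : x ≤ a ∨ x ≤ b ∨ x ≤ c ∨ x ≤ d) : x ≤ a + b + c + d := by
    rcases h with h | h | h | h <;> linarith
  refine le_sum_of_le_summand ((Real.exp_pos _).le.trans hA) (sum_nonneg biased_nonneg)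
    (sum_nonneg lowWeight_nonneg) (by positivity) ?_
  rw [mem_degLEFinset] at hP
  by_cases hsmall : bias P ≤ (1 / 2) ^ (L + 1)
  · exact .inl ((one_add_bias_pow_le_exp hsmall K).trans hA)
  by_cases hhalf : bias P ≤ 1 / 2
  · obtain ⟨l, hl, hlt, hle⟩ := exists_half_pow_lt_bias (not_le.1 hsmall) hhalf
    have term_le := single_le_sum biased_nonneg (mem_range.2 hl)
    rw [if_pos (mem_biased.2 ⟨hP, hlt⟩)] at term_le
    exact .inr (.inl ((one_add_bias_pow_le_exp hle K).trans term_le))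
  by_cases h0 : P = 0
  · rw [if_pos h0]
    exact .inr (.inr (.inr (one_add_bias_pow_le_two_pow P K)))
  · obtain ⟨i, hi, hlt, hle⟩ := exists_half_pow_lt_fracWeight hP (not_le.1 hhalf) h0
    have term_le := single_le_sum lowWeight_nonneg (mem_range.2 hi)
    rw [if_pos (mem_lowWeight.2 ⟨hP, hle⟩)] at term_le
    have bias_le : bias P ≤ 1 - 2 * (1 / 2) ^ (i + 3) := by linarith [bias_eq P]
    refine .inr (.inr (.inl ((one_add_bias_pow_le bias_le K).trans (le_trans ?_ term_le))))
    rw [show (1 : ℝ) + (1 - 2 * (1 / 2) ^ (i + 3)) = 2 * (1 - (1 / 2) ^ (i + 3)) by ring]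

theorem sum_one_add_bias_pow_le (r : ℕ) {L K : ℕ} {A : ℝ}
    (hA : Real.exp ((1 / 2) ^ (L + 1) * K) ≤ A) :
    ∑ P ∈ degLEFinset G r, (1 + bias P) ^ K ≤ A * #(degLEFinset G r) +
      ∑ l ∈ range L, #(biased G r ((1 / 2) ^ (l + 2))) * Real.exp ((1 / 2) ^ (l + 1) * K) +
      ∑ i ∈ range r, #(lowWeight G r ((1 / 2) ^ (i + 2))) *
        (2 * (1 - (1 / 2 : ℝ) ^ (i + 3))) ^ K + 2 ^ K := by
  classical
  have sum_ite_mem_eq {S : Finset (G → ZMod 2)} (hS : S ⊆ degLEFinset G r) (c : ℝ) :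
      ∑ P ∈ degLEFinset G r, (if P ∈ S then c else 0) = #S * c := by
    rw [sum_ite_mem, inter_eq_right.2 hS, sum_const, nsmul_eq_mul]
  refine (sum_le_sum fun P hP => one_add_bias_pow_le_sum hP hA).trans_eq ?_
  simp only [sum_add_distrib, sum_comm (s := degLEFinset G r), sum_ite_mem_eq (biased_subset r _),
    sum_ite_mem_eq (lowWeight_subset r _), sum_const, nsmul_eq_mul, mul_comm A, sum_ite_eq',
    mem_degLEFinset, zero_mem, if_true]

end Moment

section Estimates

variable {m r K : ℕ} {ε ρ c : ℝ}

theorem exp_le_two_rpow {x : ℝ} (hx : 0 ≤ x) : Real.exp x ≤ 2 ^ (3 / 2 * x) := by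
  rw [Real.rpow_def_of_pos two_pos]
  gcongr
  nlinarith [Real.log_two_gt_d9]

theorem card_biased_mul_two_pow_le (hm : 2000 * r ≤ m) (n : ℕ) :
    (#(biased (Fin m → ZMod 2) r ((1 / 2) ^ (n + 1))) : ℝ) * 2 ^ binomLe (m - (3 * n + 4)) r ≤
      2 ^ (binomLe m r * (1 / 16) ^ n + binomLe m r + m * (3 * n + 4) : ℝ) := by
  have error_rate : 2 * (1 / (2 ^ (3 * n + 4) * ((1 / 2 : ℝ) ^ (n + 1)) ^ 2)) =
      (1 / 2) ^ (n + 1) := by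
    simp only [one_div, inv_pow]
    field_simp
    ring
  have count := card_biased_mul_le m r (3 * n + 4) (δ := (1 / 2) ^ (n + 1)) (by positivity)
  rw [error_rate] at count
  calc (#(biased (Fin m → ZMod 2) r ((1 / 2) ^ (n + 1))) : ℝ) * 2 ^ binomLe (m - (3 * n + 4)) r
      ≤ #(lowWeight (Fin m → ZMod 2) r ((1 / 2) ^ (n + 1))) * 2 ^ binomLe m r *
        (2 ^ m) ^ (3 * n + 4) := by exact_mod_cast count
    _ ≤ 2 ^ ((binomLe m r : ℝ) * (1 / 16) ^ n) * 2 ^ binomLe m r * (2 ^ m) ^ (3 * n + 4) := by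
        gcongr
        exact card_lowWeight_le_two_rpow hm n
    _ = 2 ^ (binomLe m r * (1 / 16) ^ n + binomLe m r + m * (3 * n + 4) : ℝ) := by
        rw [Real.rpow_add two_pos, Real.rpow_add two_pos, Real.rpow_mul two_pos.le (m : ℝ),
          Real.rpow_natCast, Real.rpow_natCast]
        norm_cast

theorem half_pow_add_le {n : ℕ} (hn : 1 ≤ n) :
    3 / 2 * (1 / 2 : ℝ) ^ n + (1 / 16) ^ n ≤ 9 / 10 * (499 / 500) ^ (3 * n + 4) := by
  induction n, hn using Nat.le_induction with
  | base => norm_num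
  | succ n _ ih =>
    have pow_pos : (0 : ℝ) < (499 / 500) ^ (3 * n + 4) := by positivity
    have pow_pos' : (0 : ℝ) < (1 / 16) ^ n := by positivity
    have ratio : (99 / 100 : ℝ) ≤ (499 / 500) ^ 3 := by norm_num
    rw [show 3 * (n + 1) + 4 = 3 * n + 4 + 3 by ring, pow_add _ _ 3, pow_succ _ n, pow_succ _ n]
    linarith [mul_le_mul_of_nonneg_left ratio pow_pos.le]

theorem linear_mul_le_of_mul_pow_le {n : ℕ} {D : ℝ} (h : 1000 * m * (9 / 8 : ℝ) ^ n ≤ D) :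
    (3 * n + 5) * (m : ℝ) ≤ 1 / 10 * (499 / 500) ^ (3 * n + 4) * D := by
  have pow_le : (99 / 100 : ℝ) * (99 / 100) ^ n ≤ (499 / 500) ^ (3 * n + 4) := by
    rw [pow_add _ (3 * n) 4, pow_mul, mul_comm]
    gcongr <;> norm_num
  have bernoulli : 1 + n * (1 / 10) ≤ (11 / 10 : ℝ) ^ n := by
    have := one_add_mul_le_pow (a := (1 / 10 : ℝ)) (by norm_num) n
    norm_num at this ⊢
    linarith
  have pow_le_mul : (11 / 10 : ℝ) ^ n ≤ (99 / 100) ^ n * (9 / 8) ^ n := by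
    rw [← mul_pow]
    gcongr
    norm_num
  calc (3 * n + 5) * (m : ℝ) ≤ 99 * (1 + n * (1 / 10)) * m := by
        gcongr
        linarith [Nat.cast_nonneg (α := ℝ) n]
    _ ≤ 99 * ((99 / 100) ^ n * (9 / 8) ^ n) * m := by
        gcongr
        exact bernoulli.trans pow_le_mul
    _ = 1 / 10 * (99 / 100 * (99 / 100) ^ n) * (1000 * m * (9 / 8) ^ n) := by ring
    _ ≤ 1 / 10 * (499 / 500) ^ (3 * n + 4) * D := by gcongr

theorem card_biased_mul_exp_le {n : ℕ} (hm : 2000 * r ≤ m) (hK : K ≤ binomLe m r) (hn : 1 ≤ n)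
    (hnm : 2 * (3 * n + 4) ≤ m) (hD : 1000 * m * (9 / 8 : ℝ) ^ n ≤ binomLe m r) :
    (#(biased (Fin m → ZMod 2) r ((1 / 2) ^ (n + 1))) : ℝ) * Real.exp ((1 / 2) ^ n * K) ≤
      2 ^ binomLe m r * 2 ^ (-(m : ℝ)) := by
  set D : ℝ := (binomLe m r : ℝ) with hDdef
  set D' : ℝ := (binomLe (m - (3 * n + 4)) r : ℝ) with hD'def
  have count := card_biased_mul_two_pow_le hm n
  rw [← Real.rpow_natCast 2 (binomLe (m - (3 * n + 4)) r), ← hDdef, ← hD'def] at count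
  have exp_le : Real.exp ((1 / 2) ^ n * K) ≤ 2 ^ (3 / 2 * ((1 / 2) ^ n * D)) := by
    refine (exp_le_two_rpow (by positivity)).trans
      (Real.rpow_le_rpow_of_exponent_le one_le_two ?_)
    gcongr
    rw [hDdef]
    exact_mod_cast hK
  have exponent_le : D * (1 / 16) ^ n + D + m * (3 * n + 4) + 3 / 2 * ((1 / 2) ^ n * D) ≤
      D - m + D' := by
    have restriction : (499 / 500 : ℝ) ^ (3 * n + 4) * D ≤ D' :=
      pow_mul_binomLe_le_binomLe_sub (by lia) (by lia)
    have entropy := mul_le_mul_of_nonneg_right (half_pow_add_le hn) (Nat.cast_nonneg _ : 0 ≤ D)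
    linarith [linear_mul_le_of_mul_pow_le hD]
  refine le_of_mul_le_mul_right ?_ (by positivity : (0 : ℝ) < 2 ^ D')
  calc (#(biased (Fin m → ZMod 2) r ((1 / 2) ^ (n + 1))) : ℝ) * Real.exp ((1 / 2) ^ n * K) * 2 ^ D'
      = #(biased (Fin m → ZMod 2) r ((1 / 2) ^ (n + 1))) * 2 ^ D' *
          Real.exp ((1 / 2) ^ n * K) := by ring
    _ ≤ 2 ^ (D * (1 / 16) ^ n + D + m * (3 * n + 4)) * 2 ^ (3 / 2 * ((1 / 2) ^ n * D)) := by gcongr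
    _ ≤ 2 ^ (D - m + D') := by
        rw [← Real.rpow_add two_pos]
        exact Real.rpow_le_rpow_of_exponent_le one_le_two exponent_le
    _ = 2 ^ binomLe m r * 2 ^ (-(m : ℝ)) * 2 ^ D' := by
        rw [Real.rpow_add two_pos, sub_eq_add_neg, Real.rpow_add two_pos, hDdef, Real.rpow_natCast]

theorem two_mul_one_sub_le_two_rpow {x : ℝ} (hx : 0 ≤ x) : 2 * (1 - x) ≤ 2 ^ (1 - x) := by
  have exp_le : Real.exp (-x) ≤ Real.exp (Real.log 2 * -x) := by
    gcongr
    nlinarith [Real.log_two_lt_d9]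
  rw [sub_eq_add_neg, Real.rpow_add two_pos, Real.rpow_one, Real.rpow_def_of_pos two_pos (-x)]
  linarith [Real.add_one_le_exp (-x)]

theorem card_lowWeight_mul_pow_le (hε : 0 ≤ ε) (hr : 1 ≤ r) (hm : 2000 * r ≤ m)
    (hK : (K : ℝ) ≤ (1 - ε) * binomLe m r) (i : ℕ) :
    (#(lowWeight (Fin m → ZMod 2) r ((1 / 2) ^ (i + 2))) : ℝ) *
      (2 * (1 - (1 / 2 : ℝ) ^ (i + 3))) ^ K ≤ 2 ^ binomLe m r * 2 ^ (-(ε / 2 * m)) := by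
  set D : ℝ := (binomLe m r : ℝ) with hD
  set x : ℝ := (1 / 2) ^ (i + 3) with hx
  have x_pos : 0 < x := by positivity
  have x_le : x ≤ 1 / 2 := by
    rw [hx]
    exact pow_le_of_le_one (by norm_num) (by norm_num) (by lia)
  have m_le : (m : ℝ) ≤ D := by
    rw [hD]
    exact_mod_cast (Nat.le_succ m).trans (succ_le_binomLe hr)
  have sixteenth_pow_le : (1 / 16 : ℝ) ^ (i + 1) ≤ x / 2 := by
    have : (1 / 16 : ℝ) ^ i ≤ (1 / 2) ^ i := by gcongr; norm_num
    rw [hx, pow_succ, pow_add]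
    linarith
  have exponent_le : D * (1 / 16) ^ (i + 1) + (1 - x) * K ≤ D + -(ε / 2 * m) :=
    calc D * (1 / 16) ^ (i + 1) + (1 - x) * K ≤ D * (x / 2) + (1 - x) * ((1 - ε) * D) := by
          gcongr
          linarith
      _ ≤ D + -(ε / 2 * D) := by
          nlinarith [mul_nonneg (Nat.cast_nonneg _ : 0 ≤ D)
            (by nlinarith : 0 ≤ x / 2 + ε / 2 - x * ε)]
      _ ≤ D + -(ε / 2 * m) := by gcongr
  calc (#(lowWeight (Fin m → ZMod 2) r ((1 / 2) ^ (i + 2))) : ℝ) * (2 * (1 - x)) ^ K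
      ≤ 2 ^ (D * (1 / 16) ^ (i + 1)) * (2 ^ (1 - x)) ^ K := by
        have : 0 ≤ 2 * (1 - x) := by linarith
        gcongr
        · exact card_lowWeight_le_two_rpow hm (i + 1)
        · exact two_mul_one_sub_le_two_rpow x_pos.le
    _ = 2 ^ (D * (1 / 16) ^ (i + 1) + (1 - x) * K) := by
        rw [Real.rpow_add two_pos, Real.rpow_mul two_pos.le _ (K : ℝ), Real.rpow_natCast]
    _ ≤ 2 ^ (D + -(ε / 2 * m)) := Real.rpow_le_rpow_of_exponent_le one_le_two exponent_le
    _ = 2 ^ binomLe m r * 2 ^ (-(ε / 2 * m)) := by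
        rw [Real.rpow_add two_pos, hD, Real.rpow_natCast]

theorem binomLe_pow_le_two_pow (hm : 2000 * r ≤ m) : binomLe m r ^ 16 ≤ 2 ^ m := by
  have binomLe_le : (binomLe m r : ℝ) ≤ 32 ^ r * (33 / 32) ^ m := by
    have h := binomLe_mul_pow_le m r (x := 1 / 32) (by norm_num) (by norm_num)
    rw [one_div, inv_pow, ← div_eq_mul_inv, div_le_iff₀ (by positivity), mul_comm] at h
    norm_num at h ⊢
    exact h
  have pow_le : (32 ^ r : ℝ) ^ 16 ≤ (6 / 5) ^ m :=
    calc (32 ^ r : ℝ) ^ 16 = 2 ^ (80 * r) := by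
          rw [← pow_mul, pow_mul 2 80, mul_comm, pow_mul]
          norm_num
      _ ≤ ((6 / 5) ^ 4) ^ (80 * r) := by gcongr; norm_num
      _ = (6 / 5) ^ (4 * (80 * r)) := (pow_mul _ _ _).symm
      _ ≤ (6 / 5) ^ m := by gcongr; exacts [by norm_num, by lia]
  have : ((binomLe m r : ℝ)) ^ 16 ≤ 2 ^ m :=
    calc (binomLe m r : ℝ) ^ 16 ≤ (32 ^ r * (33 / 32) ^ m) ^ 16 := by gcongr
      _ = (32 ^ r) ^ 16 * ((33 / 32) ^ 16) ^ m := by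
        rw [mul_pow, ← pow_mul _ m, mul_comm m, pow_mul _ 16]
      _ ≤ (6 / 5) ^ m * ((33 / 32) ^ 16) ^ m := by gcongr
      _ = (6 / 5 * (33 / 32) ^ 16) ^ m := (mul_pow _ _ _).symm
      _ ≤ 2 ^ m := by gcongr; norm_num
  exact_mod_cast this

theorem mul_pow_le_binomLe {n : ℕ} (hr : 2 ≤ r) (hm : 8 * 10 ^ 12 * c ≤ (m : ℝ) ^ 2)
    (hn : 2 ^ n ≤ c * binomLe m r) : 1000 * m * (9 / 8 : ℝ) ^ n ≤ binomLe m r := by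
  set D : ℝ := (binomLe m r : ℝ) with hD
  have sq_le : (m : ℝ) ^ 2 ≤ 2 * D := by
    rw [hD]
    exact_mod_cast sq_le_two_mul_binomLe hr
  have D_nonneg : 0 ≤ D := Nat.cast_nonneg _
  rw [← pow_le_pow_iff_left₀ (n := 4) (by positivity) D_nonneg (by norm_num)]
  have pow_four_le : ((9 / 8 : ℝ) ^ n) ^ 4 ≤ 2 ^ n := by
    rw [← pow_mul, mul_comm, pow_mul]
    gcongr
    norm_num
  have cube_le : 8 * 10 ^ 12 * c * (m : ℝ) ^ 4 ≤ 8 * D ^ 3 :=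
    calc 8 * 10 ^ 12 * c * (m : ℝ) ^ 4 ≤ (m : ℝ) ^ 2 * (m : ℝ) ^ 4 := by gcongr
      _ = ((m : ℝ) ^ 2) ^ 3 := by ring
      _ ≤ (2 * D) ^ 3 := by gcongr
      _ = 8 * D ^ 3 := by ring
  calc (1000 * m * (9 / 8 : ℝ) ^ n) ^ 4 = 10 ^ 12 * m ^ 4 * ((9 / 8 : ℝ) ^ n) ^ 4 := by ring
    _ ≤ 10 ^ 12 * m ^ 4 * (c * D) := by
        gcongr
        exact pow_four_le.trans hn
    _ = 8 * 10 ^ 12 * c * m ^ 4 * D / 8 := by ring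
    _ ≤ 8 * D ^ 3 * D / 8 := by gcongr
    _ = D ^ 4 := by ring

theorem eight_mul_le_of_two_pow_le {L : ℕ} (hm : 2000 * r ≤ m) (hc : c ^ 16 ≤ 2 ^ m)
    (hL : 2 ^ L ≤ c * binomLe m r) : 8 * L ≤ m := by
  have : (2 : ℝ) ^ (16 * L) ≤ 2 ^ (2 * m) :=
    calc (2 : ℝ) ^ (16 * L) = (2 ^ L) ^ 16 := by rw [mul_comm, pow_mul]
      _ ≤ (c * binomLe m r) ^ 16 := by gcongr
      _ = c ^ 16 * binomLe m r ^ 16 := mul_pow _ _ _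
      _ ≤ 2 ^ m * 2 ^ m := by
          gcongr
          exact_mod_cast binomLe_pow_le_two_pow hm
      _ = 2 ^ (2 * m) := by ring
  have := (pow_le_pow_iff_right₀ one_lt_two).1 this
  lia

end Estimates

section LargeDimension

variable {ε ρ c : ℝ}

theorem eventually_mul_two_rpow_neg_le (hc : 0 < c) (hρ : 0 < ρ) :
    ∀ᶠ m : ℕ in atTop, m * (2 : ℝ) ^ (-(c * m)) ≤ ρ := by
  have base_lt_one : (2 : ℝ) ^ (-c) < 1 :=
    Real.rpow_lt_one_of_one_lt_of_neg one_lt_two (by linarith)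
  filter_upwards [(tendsto_self_mul_const_pow_of_lt_one (by positivity)
    base_lt_one).eventually_le_const hρ] with m hm
  rwa [← neg_mul, Real.rpow_mul two_pos.le, Real.rpow_natCast]

theorem eventually_sum_biased_le (hρ : 0 < ρ) (c : ℝ) :
    ∀ᶠ m : ℕ in atTop, ∀ r, 2 ≤ r → 2000 * r ≤ m → ∀ K ≤ binomLe m r,
      ∀ L : ℕ, 2 ^ L ≤ c * binomLe m r →
        ∑ l ∈ range L, #(biased (Fin m → ZMod 2) r ((1 / 2) ^ (l + 2))) *
          Real.exp ((1 / 2) ^ (l + 1) * K) ≤ ρ * 2 ^ binomLe m r := by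
  filter_upwards [eventually_ge_atTop 32,
    (tendsto_pow_atTop_atTop_of_one_lt one_lt_two).eventually_ge_atTop (c ^ 16),
    ((tendsto_pow_atTop two_ne_zero).comp
      tendsto_natCast_atTop_atTop).eventually_ge_atTop (8 * 10 ^ 12 * c),
    eventually_mul_two_rpow_neg_le one_pos hρ] with m hm32 hc16 hcsq hmρ r hr hm K hK L hL
  rw [one_mul] at hmρ
  have eight_mul_le : 8 * L ≤ m := eight_mul_le_of_two_pow_le hm hc16 hL
  have term_le (l : ℕ) (hl : l ∈ range L) :
      #(biased (Fin m → ZMod 2) r ((1 / 2) ^ (l + 2))) * Real.exp ((1 / 2) ^ (l + 1) * K) ≤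
        2 ^ binomLe m r * 2 ^ (-(m : ℝ)) := by
    have hl := mem_range.1 hl
    have directions_le : 2 * (3 * (l + 1) + 4) ≤ m := by linarith [hm32]
    have pow_le : (2 : ℝ) ^ (l + 1) ≤ c * binomLe m r :=
      (pow_le_pow_right₀ one_le_two hl).trans hL
    exact card_biased_mul_exp_le hm hK (by lia) directions_le (mul_pow_le_binomLe hr hcsq pow_le)
  calc _ ≤ (L : ℝ) * (2 ^ binomLe m r * 2 ^ (-(m : ℝ))) := by
        simpa using sum_le_card_nsmul _ _ _ term_le
    _ ≤ m * (2 ^ binomLe m r * 2 ^ (-(m : ℝ))) := by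
        gcongr
        lia
    _ = m * 2 ^ (-(m : ℝ)) * 2 ^ binomLe m r := by ring
    _ ≤ ρ * 2 ^ binomLe m r := by gcongr

theorem eventually_sum_lowWeight_le (hε : 0 < ε) (hρ : 0 < ρ) :
    ∀ᶠ m : ℕ in atTop, ∀ r, 1 ≤ r → 2000 * r ≤ m →
      ∀ K : ℕ, (K : ℝ) ≤ (1 - ε) * binomLe m r →
        ∑ i ∈ range r, #(lowWeight (Fin m → ZMod 2) r ((1 / 2) ^ (i + 2))) *
          (2 * (1 - (1 / 2 : ℝ) ^ (i + 3))) ^ K ≤ ρ * 2 ^ binomLe m r := by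
  filter_upwards [eventually_mul_two_rpow_neg_le (half_pos hε) hρ] with m hmρ r hr hm K hK
  calc _ ≤ (r : ℝ) * (2 ^ binomLe m r * 2 ^ (-(ε / 2 * m : ℝ))) := by
        simpa using sum_le_card_nsmul (range r) _ _ fun i _ =>
          card_lowWeight_mul_pow_le hε.le hr hm hK i
    _ ≤ m * (2 ^ binomLe m r * 2 ^ (-(ε / 2 * m))) := by
        gcongr
        lia
    _ = m * 2 ^ (-(ε / 2 * m)) * 2 ^ binomLe m r := by ring
    _ ≤ ρ * 2 ^ binomLe m r := by gcongr

theorem eventually_two_pow_le (hε : 0 < ε) (hρ : 0 < ρ) :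
    ∀ᶠ m : ℕ in atTop, ∀ r, 1 ≤ r → ∀ K : ℕ, (K : ℝ) ≤ (1 - ε) * binomLe m r →
      (2 : ℝ) ^ K ≤ ρ * 2 ^ binomLe m r := by
  filter_upwards [eventually_ge_atTop 1, eventually_mul_two_rpow_neg_le hε hρ]
    with m hm hmρ r hr K hK
  have m_le : (m : ℝ) ≤ binomLe m r := by
    exact_mod_cast (Nat.le_succ m).trans (succ_le_binomLe hr)
  calc (2 : ℝ) ^ K = 2 ^ (K : ℝ) := (Real.rpow_natCast _ _).symm
    _ ≤ 2 ^ (binomLe m r + -(ε * m)) := by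
        refine Real.rpow_le_rpow_of_exponent_le one_le_two ?_
        linarith [mul_le_mul_of_nonneg_left m_le hε.le]
    _ = 1 * 2 ^ (-(ε * m)) * 2 ^ binomLe m r := by
        rw [Real.rpow_add two_pos, Real.rpow_natCast]
        ring
    _ ≤ m * 2 ^ (-(ε * m)) * 2 ^ binomLe m r := by
        gcongr
        exact_mod_cast hm
    _ ≤ ρ * 2 ^ binomLe m r := by gcongr

theorem eventually_exists_exp_le (hρ : 0 < ρ) :
    ∃ c : ℝ, ∀ᶠ m : ℕ in atTop, ∀ r, 1 ≤ r → ∀ K ≤ binomLe m r,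
      ∃ L : ℕ, 2 ^ L ≤ c * binomLe m r ∧ Real.exp ((1 / 2) ^ (L + 1) * K) ≤ 1 + ρ := by
  have log_pos : 0 < Real.log (1 + ρ) := Real.log_pos (by linarith)
  refine ⟨(Real.log (1 + ρ))⁻¹, ?_⟩
  filter_upwards [tendsto_natCast_atTop_atTop.eventually_ge_atTop (Real.log (1 + ρ))]
    with m hm r hr K hK
  have m_le : (m : ℝ) ≤ binomLe m r := by
    exact_mod_cast (Nat.le_succ m).trans (succ_le_binomLe hr)
  obtain ⟨L, hL, hlt⟩ := exists_nat_pow_near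
    ((one_le_inv_mul₀ log_pos).2 (hm.trans m_le)) one_lt_two
  refine ⟨L, hL, (Real.le_log_iff_exp_le (by linarith)).1 ?_⟩
  have K_le : (K : ℝ) ≤ binomLe m r := by exact_mod_cast hK
  rw [inv_mul_lt_iff₀ log_pos] at hlt
  rw [one_div, inv_pow, inv_mul_le_iff₀ (by positivity)]
  linarith

theorem le_of_natCast_le_one_sub_mul {K D : ℕ} (hε : 0 ≤ ε) (h : (K : ℝ) ≤ (1 - ε) * D) :
    K ≤ D := by
  have : (K : ℝ) ≤ D := h.trans (mul_le_of_le_one_left (Nat.cast_nonneg _) (by linarith))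
  exact_mod_cast this

theorem eventually_sum_one_add_bias_pow_le (hε : 0 < ε) (hρ : 0 < ρ) :
    ∀ᶠ m : ℕ in atTop, ∀ r, 2000 * r ≤ m → ∀ K : ℕ, (K : ℝ) ≤ (1 - ε) * binomLe m r →
      ∑ P ∈ degLEFinset (Fin m → ZMod 2) r, (1 + bias P) ^ K ≤ (1 + ρ) * 2 ^ binomLe m r := by
  have hρ4 : 0 < ρ / 4 := by linarith
  obtain ⟨c, exists_exp_le⟩ := eventually_exists_exp_le hρ4
  filter_upwards [exists_exp_le, eventually_sum_biased_le hρ4 c,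
    eventually_sum_lowWeight_le hε hρ4, eventually_two_pow_le hε hρ4]
    with m exists_exp_le sum_biased_le sum_lowWeight_le two_pow_le r hm K hK
  have hKD := le_of_natCast_le_one_sub_mul hε.le hK
  have card_eq : (#(degLEFinset (Fin m → ZMod 2) r) : ℝ) = 2 ^ binomLe m r := by
    exact_mod_cast card_degLEFinset_cube m r
  have pow_pos : (0 : ℝ) < 2 ^ binomLe m r := by positivity
  obtain rfl | rfl | hr : r = 0 ∨ r = 1 ∨ 2 ≤ r := by lia
  · obtain rfl : K = 0 := by
      rw [binomLe_zero_right, Nat.cast_one] at hK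
      have : (K : ℝ) < 1 := by linarith
      exact Nat.lt_one_iff.1 (by exact_mod_cast this)
    simp only [pow_zero, sum_const, nsmul_one, card_eq]
    nlinarith
  · have := sum_one_add_bias_pow_le_of_degree_one (G := Fin m → ZMod 2) K
    rw [card_eq] at this
    nlinarith [two_pow_le 1 le_rfl K hK]
  · obtain ⟨L, hL, hexp⟩ := exists_exp_le r (by lia) K hKD
    have := sum_one_add_bias_pow_le (G := Fin m → ZMod 2) r hexp
    rw [card_eq] at this
    linarith [sum_biased_le r hr hm K hKD L hL, sum_lowWeight_le r (by lia) hm K hK,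
      two_pow_le r (by lia) K hK]

end LargeDimension

theorem expected_size_vanishing_space_general :
    ∃ γ₀ : ℝ, 0 < γ₀ ∧ ∀ ε : ℝ, 0 < ε → ∀ ρ : ℝ, 0 < ρ → ∃ m₀ : ℕ, ∀ m : ℕ, m₀ ≤ m →
      ∀ r : ℕ, (r : ℝ) ≤ γ₀ * m → ∀ K : ℕ, (K : ℝ) ≤ (1 - ε) * binomLe m r →
        ((2 : ℝ) ^ K)⁻¹ ≤ expectedVanishingSize m r K ∧
          expectedVanishingSize m r K ≤ ((2 : ℝ) ^ K)⁻¹ * (1 + ρ) := by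
  refine ⟨1 / 2000, by norm_num, fun ε hε ρ hρ => ?_⟩
  obtain ⟨m₀, sum_le⟩ := eventually_atTop.1 (eventually_sum_one_add_bias_pow_le hε hρ)
  refine ⟨m₀, fun m hm r hr K hK => ?_⟩
  have hrm : 2000 * r ≤ m := by
    have : 2000 * (r : ℝ) ≤ m := by linarith
    exact_mod_cast this
  have hKD := le_of_natCast_le_one_sub_mul hε.le hK
  refine ⟨inv_two_pow_le_expectedVanishingSize hKD, (expectedVanishingSize_le hKD).trans ?_⟩
  gcongr
  exact (div_le_iff₀ (by positivity)).2 (sum_le m hm r hrm K hK)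

/-- expected size of the vanishing space of a random set.
There is an absolute constant `γ₀ > 0` such that for every `ε ∈ (0,1)` and `ρ > 0`
there is `m₀` such that for all `m ≥ m₀` and `1 ≤ r < γ₀ m`, setting
`K = ⌊(1-ε)·binom(m,≤r)⌋`, the expectation over a uniformly random `K`-element
subset `Z ⊆ F₂^m` of `|I_r(Z)| / 2^{binom(m,≤r)}` lies between `2^{-K}` and
`2^{-K}·(1+ρ)`. -/
theorem expected_size_vanishing_space :
    ∃ γ₀ : ℝ, 0 < γ₀ ∧
      ∀ ε : ℝ, 0 < ε → ε < 1 →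
        ∀ ρ : ℝ, 0 < ρ →
          ∃ m₀ : ℕ, ∀ m : ℕ, m₀ ≤ m →
            ∀ r : ℕ, 1 ≤ r → (r : ℝ) < γ₀ * m →
              ∀ K : ℕ, K = ⌊(1 - ε) * (binomLe m r : ℝ)⌋₊ →
                ((2 : ℝ) ^ K)⁻¹ ≤
                    (∑ Z ∈ (Finset.univ : Finset (Fin m → ZMod 2)).powersetCard K,
                        (Nat.card ↥(vanishing m r (Z : Set (Fin m → ZMod 2))) : ℝ) /
                          2 ^ binomLe m r) /
                      (((Finset.univ : Finset (Fin m → ZMod 2)).powersetCard K).card : ℝ) ∧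
                  (∑ Z ∈ (Finset.univ : Finset (Fin m → ZMod 2)).powersetCard K,
                        (Nat.card ↥(vanishing m r (Z : Set (Fin m → ZMod 2))) : ℝ) /
                          2 ^ binomLe m r) /
                      (((Finset.univ : Finset (Fin m → ZMod 2)).powersetCard K).card : ℝ) ≤
                    ((2 : ℝ) ^ K)⁻¹ * (1 + ρ) := by
  obtain ⟨γ₀, hγ₀, bounds⟩ := expected_size_vanishing_space_general
  refine ⟨γ₀, hγ₀, fun ε hε hε1 ρ hρ => (bounds ε hε ρ hρ).imp fun m₀ bounds m hm r _ hr K hK => ?_⟩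
  exact bounds m hm r hr.le K
    (hK ▸ Nat.floor_le (mul_nonneg (sub_nonneg.2 hε1.le) (Nat.cast_nonneg _)))
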